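/- arXiv:1805.09689 — 2 statements merged into one kernel-verified Lean document; each statement's English description precedes it below -/
import Mathlib

section
/- The thickness of the complete tripartite graph K_{2,9,9} equals 3. -/
open SimpleGraph

/-- A simple graph is planar if it admits a drawing in the plane: an injective
placement of vertices and, for each edge, an injective continuous arc joining
the images of its endpoints, such that arcs avoid vertex images in their
interiors and distinct arcs meet only at vertex images. -/
def IsPlanar {V : Type*} (G : SimpleGraph V) : Prop :=
  ∃ (f : V → ℝ × ℝ) (γ : G.edgeSet → (Set.Icc (0:ℝ) 1 → ℝ × ℝ)),
    Function.Injective f ∧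
    (∀ e : G.edgeSet, Continuous (γ e)) ∧
    (∀ e : G.edgeSet, ∃ u v : V, (e : Sym2 V) = s(u, v) ∧
      γ e ⟨0, by norm_num⟩ = f u ∧ γ e ⟨1, by norm_num⟩ = f v) ∧
    (∀ e : G.edgeSet, Function.Injective (γ e)) ∧
    (∀ e : G.edgeSet, ∀ t : Set.Icc (0:ℝ) 1, (t : ℝ) ≠ 0 → (t : ℝ) ≠ 1 →
      ∀ v : V, γ e t ≠ f v) ∧
    (∀ e e' : G.edgeSet, e ≠ e' → ∀ s t : Set.Icc (0:ℝ) 1,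
      γ e s = γ e' t → γ e s ∈ Set.range f)

/-- The thickness of a graph: the least `n` such that `G` is the union of `n`
planar subgraphs. -/
noncomputable def thickness {V : Type*} (G : SimpleGraph V) : ℕ :=
  sInf {n : ℕ | ∃ H : Fin n → SimpleGraph V,
    (∀ i, H i ≤ G) ∧ (∀ i, IsPlanar (H i)) ∧ (⨆ i, H i) = G}

/-!
**Lower bound.** A planar graph on `m ≥ 3` vertices has at most `3 * m - 6` edges, so a planar
subgraph of `K_{2,9,9}` has at most `54` of its `117 > 2 * 54` edges. Since edges of a planar graph
are arbitrary continuous arcs, Euler's formula is not at hand; the edge bound is obtained from the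
mod 2 van Kampen obstruction instead. Writing `γ - δ` for two disjoint arcs as the exponential of a
continuous function on the square shows that their winding numbers around each other's ends are
related. Modulo 2 this is a linear system with one equation for each pair of disjoint edges, and its
solvability is inherited by subgraphs and by edge contractions and fails for `K_5` and `K_{3,3}`. By
Mader's argument, this forces the edge bound: a graph with `3 * m - 5` edges has a vertex `v` of
degree at most `5`, and if every edge at `v` lies in at least three triangles, then `v` lies in a
`K_5` or a `K_{3,3}`; so an edge at `v` can be contracted at the cost of at most three edges.

**Upper bound.** `K_{2,9,9}` is the union of three rotated copies of a single planar graph, of which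
a straight-line drawing with integer coordinates is given.
-/

theorem exists_continuous_log {X : Type*} [TopologicalSpace X] [SimplyConnectedSpace X]
    [LocallyPathConnectedSpace X] {F : X → ℂ} (hF : Continuous F) (h0 : ∀ x, F x ≠ 0) :
    ∃ L : X → ℂ, Continuous L ∧ ∀ x, Complex.exp (L x) = F x := by
  obtain ⟨x₀⟩ : Nonempty X := inferInstance
  obtain ⟨L, ⟨_, hL⟩, _⟩ := Complex.isCoveringMapOn_exp.existsUnique_continuousMap_lifts
    (⟨F, hF⟩ : C(X, ℂ)) (Complex.exp_log (h0 x₀)) (fun x ↦ h0 x)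
  exact ⟨L, L.continuous, congrFun hL⟩

/-- `HasLogChange g z` says that `z` is the total change over `[0, 1]` of a continuous logarithm of
the nowhere zero curve `g`; its imaginary part is the angle swept by `g` around the origin. -/
def HasLogChange (g : ℝ → ℂ) (z : ℂ) : Prop :=
  ∃ l : ℝ → ℂ, Continuous l ∧ (∀ t, Complex.exp (l t) = g t) ∧ l 1 - l 0 = z

namespace HasLogChange

variable {g h : ℝ → ℂ} {z w : ℂ}

theorem unique (hz : HasLogChange g z) (hw : HasLogChange g w) : z = w := by
  obtain ⟨l, hl, hlg, rfl⟩ := hz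
  obtain ⟨m, hm, hmg, rfl⟩ := hw
  have g_ne_zero (t) : g t ≠ 0 := hlg t ▸ Complex.exp_ne_zero _
  have hconst : l 1 - m 1 = l 0 - m 0 :=
    Complex.isCoveringMap_exp.const_of_comp (hl.sub hm)
      (fun s t ↦ Subtype.ext (by simp [Complex.exp_sub, hlg, hmg, g_ne_zero])) 1 0
  linear_combination hconst

theorem neg (hz : HasLogChange g z) : HasLogChange (-g) z := by
  obtain ⟨l, hl, hlg, rfl⟩ := hz
  exact ⟨fun t ↦ l t + Real.pi * Complex.I, by fun_prop, by simp [Complex.exp_add, hlg], by ring⟩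

theorem of_curves_disjoint (hg : Continuous g) (hh : Continuous h) (hgh : ∀ s t, g s ≠ h t)
    {z₀ z₁ w₀ w₁ : ℂ} (hz₀ : HasLogChange (fun t ↦ g t - h 0) z₀)
    (hz₁ : HasLogChange (fun t ↦ g t - h 1) z₁) (hw₀ : HasLogChange (fun t ↦ h t - g 0) w₀)
    (hw₁ : HasLogChange (fun t ↦ h t - g 1) w₁) : z₁ - z₀ = w₁ - w₀ := by
  obtain ⟨L, hL, hLgh⟩ := exists_continuous_log (F := fun p : ℝ × ℝ ↦ g p.1 - h p.2) (by fun_prop)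
    fun p ↦ sub_ne_zero.2 (hgh _ _)
  have hz (s) : HasLogChange (fun t ↦ g t - h s) (L (1, s) - L (0, s)) :=
    ⟨fun t ↦ L (t, s), by fun_prop, fun t ↦ hLgh (t, s), rfl⟩
  have hw (s) : HasLogChange (fun t ↦ h t - g s) (L (s, 1) - L (s, 0)) := by
    have : HasLogChange (fun t ↦ g s - h t) (L (s, 1) - L (s, 0)) :=
      ⟨fun t ↦ L (s, t), by fun_prop, fun t ↦ hLgh (s, t), rfl⟩
    simpa [Pi.neg_def] using this.neg
  rw [hz₀.unique (hz 0), hz₁.unique (hz 1), hw₀.unique (hw 0), hw₁.unique (hw 1)]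
  ring

end HasLogChange

theorem exists_int_hasLogChange {g : ℝ → ℂ} (hg : Continuous g) (h0 : ∀ t, g t ≠ 0) :
    ∃ n : ℤ, HasLogChange g
      (Complex.log (g 1) - Complex.log (g 0) + n * (2 * Real.pi * Complex.I)) := by
  obtain ⟨l, hl, hlg⟩ := exists_continuous_log hg h0
  have exp_eq : Complex.exp (l 1 - l 0) = Complex.exp (Complex.log (g 1) - Complex.log (g 0)) := by
    rw [Complex.exp_sub, Complex.exp_sub, hlg, hlg, Complex.exp_log (h0 1), Complex.exp_log (h0 0)]
  obtain ⟨n, hn⟩ := Complex.exp_eq_exp_iff_exists_int.1 exp_eq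
  exact ⟨n, l, hl, hlg, hn⟩

theorem log_neg_sub_log_eq_odd_mul_pi {z : ℂ} (hz : z ≠ 0) :
    ∃ k : ℤ, Complex.log (-z) - Complex.log z =
      Real.pi * Complex.I + k * (2 * Real.pi * Complex.I) := by
  rw [← Complex.exp_eq_exp_iff_exists_int, Complex.exp_sub, Complex.exp_log hz,
    Complex.exp_log (neg_ne_zero.2 hz), Complex.exp_pi_mul_I, neg_div, div_self hz]

section Drawing

variable {V : Type*} {G : SimpleGraph V}

theorem IsPlanar.exists_complex_drawing (hG : IsPlanar G) :
    ∃ (p : V → ℂ) (γ : G.edgeSet → ℝ → ℂ), Function.Injective p ∧ (∀ e, Continuous (γ e)) ∧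
      (∀ e, ∃ u v, e.1 = s(u, v) ∧ γ e 0 = p u ∧ γ e 1 = p v) ∧
      (∀ e, ∀ a ∉ e.1, ∀ t, γ e t ≠ p a) ∧
      ∀ e e', (∀ a ∈ e.1, a ∉ e'.1) → ∀ s t, γ e s ≠ γ e' t := by
  obtain ⟨f, γ, hf, hγ, hends, -, havoid, hcross⟩ := hG
  let c : (ℝ × ℝ) ≃L[ℝ] ℂ := Complex.equivRealProdCLM.symm
  have avoid (e : G.edgeSet) (a : V) (ha : a ∉ e.1) (t) : γ e t ≠ f a := by
    obtain ⟨u, v, he, hu, hv⟩ := hends e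
    simp only [he, Sym2.mem_iff, not_or] at ha
    by_cases t0 : (t : ℝ) = 0
    · rw [show t = ⟨0, by norm_num⟩ from Subtype.ext t0, hu]
      exact hf.ne (Ne.symm ha.1)
    by_cases t1 : (t : ℝ) = 1
    · rw [show t = ⟨1, by norm_num⟩ from Subtype.ext t1, hv]
      exact hf.ne (Ne.symm ha.2)
    exact havoid e t t0 t1 a
  refine ⟨c ∘ f, fun e t ↦ c (γ e (Set.projIcc 0 1 zero_le_one t)), c.injective.comp hf,
    fun e ↦ c.continuous.comp ((hγ e).comp continuous_projIcc), fun e ↦ ?_,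
    fun e a ha t ↦ c.injective.ne (avoid e a ha _), fun e e' hee' s t h ↦ ?_⟩
  · obtain ⟨u, v, he, hu, hv⟩ := hends e
    exact ⟨u, v, he, by simpa using hu, by simpa using hv⟩
  · have hne : e ≠ e' := by
      rintro rfl
      obtain ⟨u, v, he, -⟩ := hends e
      exact hee' u (by simp [he]) (by simp [he])
    have h := c.injective h
    obtain ⟨a, ha⟩ := hcross e e' hne _ _ h
    have hae : a ∈ e.1 := by_contra fun hae ↦ avoid e a hae _ ha.symm
    exact avoid e' a (hee' a hae) _ (h ▸ ha.symm)

theorem IsPlanar.exists_winding_numbers (hG : IsPlanar G) :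
    ∃ (u v : G.edgeSet → V) (n : G.edgeSet → V → ℤ) (k : V → V → ℤ), (∀ e, e.1 = s(u e, v e)) ∧
      (∀ a b, a ≠ b → k a b + k b a = -1) ∧
      ∀ e e', (∀ a ∈ e.1, a ∉ e'.1) →
        n e (v e') - n e (u e') - (n e' (v e) - n e' (u e)) =
          k (v e) (v e') - k (v e) (u e') - (k (u e) (v e') - k (u e) (u e')) := by
  obtain ⟨p, γ, hp, hγ, hends, havoid, hdisj⟩ := hG.exists_complex_drawing
  choose u v huv hu hv using hends
  let ℓ (a b : V) : ℂ := Complex.log (p b - p a)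
  have hk (a b : V) (hab : a ≠ b) : ∃ k : ℤ,
      ℓ a b - ℓ b a = Real.pi * Complex.I + k * (2 * Real.pi * Complex.I) := by
    simpa only [ℓ, neg_sub] using log_neg_sub_log_eq_odd_mul_pi (sub_ne_zero.2 (hp.ne hab))
  have hn (e : G.edgeSet) (a : V) (ha : a ∉ e.1) : ∃ n : ℤ, HasLogChange (fun t ↦ γ e t - p a)
      (ℓ a (v e) - ℓ a (u e) + n * (2 * Real.pi * Complex.I)) := by
    simpa only [ℓ, ← hu, ← hv] using exists_int_hasLogChange (g := fun t ↦ γ e t - p a)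
      ((hγ e).sub continuous_const) fun t ↦ sub_ne_zero.2 (havoid e a ha t)
  choose! k hk using hk
  choose! n hn using hn
  have int_eq_zero {m : ℤ} (hm : (m : ℂ) * (2 * Real.pi * Complex.I) = 0) : m = 0 := by
    exact_mod_cast (mul_eq_zero.1 hm).resolve_right Complex.two_pi_I_ne_zero
  refine ⟨u, v, n, k, huv, fun a b hab ↦ ?_, fun e e' hee' ↦ ?_⟩
  · refine eq_neg_of_add_eq_zero_left (int_eq_zero ?_)
    push_cast
    linear_combination -hk a b hab - hk b a hab.symm
  · have mem_u (e : G.edgeSet) : u e ∈ e.1 := by simp [huv]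
    have mem_v (e : G.edgeSet) : v e ∈ e.1 := by simp [huv]
    have hne {a b : V} (ha : a ∈ e.1) (hb : b ∈ e'.1) : a ≠ b := fun h ↦ hee' a ha (h ▸ hb)
    have hrel := HasLogChange.of_curves_disjoint (hγ e) (hγ e') (hdisj e e' hee')
      (hu e' ▸ hn e (u e') fun h ↦ hee' _ h (mem_u e'))
      (hv e' ▸ hn e (v e') fun h ↦ hee' _ h (mem_v e'))
      (hu e ▸ hn e' (u e) (hee' _ (mem_u e))) (hv e ▸ hn e' (v e) (hee' _ (mem_v e)))
    refine sub_eq_zero.1 (int_eq_zero ?_)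
    push_cast
    linear_combination hrel + hk _ _ (hne (mem_v e) (mem_v e')) - hk _ _ (hne (mem_v e) (mem_u e'))
      - hk _ _ (hne (mem_u e) (mem_v e')) + hk _ _ (hne (mem_u e) (mem_u e'))

end Drawing

/-- The mod 2 van Kampen equation of two disjoint edges `u v` and `a b`. If `o` is the indicator of
a linear order on the vertices, place the vertices on a circle in that order and draw the edges as
chords: the right hand side is the crossing parity of the two edges. With `x e w` recording how
often the edge `e` is then pulled across the vertex `w`, the equation says that the two edges end up
crossing an even number of times. -/
abbrev VanKampenEquation {V : Type*} (x : Sym2 V → V → ZMod 2) (o : V → V → ZMod 2)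
    (u v a b : V) : Prop :=
  x s(u, v) a + x s(u, v) b + x s(a, b) u + x s(a, b) v = o u a + o u b + o v a + o v b

/-- The mod 2 van Kampen obstruction of `G` vanishes. A tournament `o` in place of a linear order
costs nothing, since reversing one arc amounts to pulling edges across vertices. -/
def VanKampenTrivial {V : Type*} (G : SimpleGraph V) : Prop :=
  ∃ (x : Sym2 V → V → ZMod 2) (o : V → V → ZMod 2),
    (∀ u v, u ≠ v → o u v + o v u = 1) ∧
    ∀ u v a b, G.Adj u v → G.Adj a b → u ≠ a → u ≠ b → v ≠ a → v ≠ b →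
      VanKampenEquation x o u v a b

section VanKampen

variable {V W : Type*} {G : SimpleGraph V} {H : SimpleGraph W}

namespace VanKampenEquation

variable {x : Sym2 V → V → ZMod 2} {o : V → V → ZMod 2} {u v a b : V}

theorem swap_left (h : VanKampenEquation x o u v a b) : VanKampenEquation x o v u a b := by
  rw [VanKampenEquation, Sym2.eq_swap]
  linear_combination h

theorem symm (h : VanKampenEquation x o u v a b) (ho : ∀ u v, u ≠ v → o u v + o v u = 1)
    (hua : u ≠ a) (hub : u ≠ b) (hva : v ≠ a) (hvb : v ≠ b) : VanKampenEquation x o a b u v := by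
  linear_combination (norm := (ring_nf; reduce_mod_char))
    h + ho u a hua + ho u b hub + ho v a hva + ho v b hvb

end VanKampenEquation

theorem IsPlanar.vanKampenTrivial (hG : IsPlanar G) : VanKampenTrivial G := by
  classical
  obtain ⟨u, v, n, k, huv, hk, hn⟩ := hG.exists_winding_numbers
  refine ⟨fun e a ↦ if h : e ∈ G.edgeSet then n ⟨e, h⟩ a else 0, fun a b ↦ k a b,
    fun a b hab ↦ by
      simpa using congrArg (Int.cast : ℤ → ZMod 2) (hk a b hab), ?_⟩
  intro a b c d hab hcd hac had hbc hbd
  have hrel := congrArg (Int.cast : ℤ → ZMod 2) <| hn ⟨s(a, b), hab⟩ ⟨s(c, d), hcd⟩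
    (by simp [hac, had, hbc, hbd])
  push_cast [CharTwo.sub_eq_add] at hrel
  simp only [VanKampenEquation, dif_pos (show s(a, b) ∈ G.edgeSet from hab),
    dif_pos (show s(c, d) ∈ G.edgeSet from hcd)]
  rcases Sym2.eq_iff.1 (huv ⟨s(a, b), hab⟩) with ⟨h₁, h₂⟩ | ⟨h₁, h₂⟩ <;>
  rcases Sym2.eq_iff.1 (huv ⟨s(c, d), hcd⟩) with ⟨h₃, h₄⟩ | ⟨h₃, h₄⟩ <;>
  · rw [← h₁, ← h₂, ← h₃, ← h₄] at hrel
    linear_combination hrel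

theorem VanKampenTrivial.of_isContained (hG : VanKampenTrivial G) (hHG : H ⊑ G) :
    VanKampenTrivial H := by
  obtain ⟨x, o, ho, hx⟩ := hG
  obtain ⟨f⟩ := hHG
  have hf := f.injective
  refine ⟨fun e a ↦ x (e.map f) (f a), fun a b ↦ o (f a) (f b), fun u v h ↦ ho _ _ (hf.ne h), ?_⟩
  intro u v a b huv hab hua hub hva hvb
  exact hx _ _ _ _ (f.toHom.map_adj huv) (f.toHom.map_adj hab) (hf.ne hua) (hf.ne hub)
    (hf.ne hva) (hf.ne hvb)

theorem VanKampenTrivial.exists_sum_fourClique (hG : VanKampenTrivial G) :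
    ∃ x : Sym2 V → V → ZMod 2, ∀ a b c d, [a, b, c, d].Pairwise G.Adj →
      x s(a, b) c + x s(a, b) d + x s(c, d) a + x s(c, d) b +
      x s(a, c) b + x s(a, c) d + x s(b, d) a + x s(b, d) c +
      x s(a, d) b + x s(a, d) c + x s(b, c) a + x s(b, c) d = 1 := by
  obtain ⟨x, o, ho, hx⟩ := hG
  refine ⟨x, fun a b c d h ↦ ?_⟩
  obtain ⟨⟨hab, hac, had⟩, ⟨hbc, hbd⟩, hcd⟩ :
      (G.Adj a b ∧ G.Adj a c ∧ G.Adj a d) ∧ (G.Adj b c ∧ G.Adj b d) ∧ G.Adj c d := by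
    simpa using h
  linear_combination (norm := (ring_nf; reduce_mod_char))
    hx a b c d hab hcd hac.ne had.ne hbc.ne hbd.ne +
    hx a c b d hac hbd hab.ne had.ne hbc.ne' hcd.ne +
    hx a d b c had hbc hab.ne hac.ne hbd.ne' hcd.ne' + ho b c hbc.ne + ho b d hbd.ne + ho c d hcd.ne

theorem VanKampenTrivial.exists_sum_fourCycle (hG : VanKampenTrivial G) :
    ∃ (x : Sym2 V → V → ZMod 2) (o : V → V → ZMod 2), ∀ a b p q, a ≠ b → p ≠ q →
      G.Adj a p → G.Adj a q → G.Adj b p → G.Adj b q →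
      x s(a, p) b + x s(a, p) q + x s(b, q) a + x s(b, q) p +
      x s(a, q) b + x s(a, q) p + x s(b, p) a + x s(b, p) q =
        1 + o a p + o a q + o b p + o b q := by
  obtain ⟨x, o, ho, hx⟩ := hG
  refine ⟨x, o, fun a b p q hab hpq hap haq hbp hbq ↦ ?_⟩
  linear_combination (norm := (ring_nf; reduce_mod_char))
    hx a p b q hap hbq hab haq.ne hbp.ne' hpq + hx a q b p haq hbp hab hap.ne hbq.ne' hpq.symm +
    ho b p hbp.ne + ho b q hbq.ne + ho p q hpq

theorem not_vanKampenTrivial_top_fin_five : ¬ VanKampenTrivial (⊤ : SimpleGraph (Fin 5)) := by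
  intro h
  obtain ⟨x, hx⟩ := h.exists_sum_fourClique
  refine absurd (?_ : (5 : ZMod 2) = 0) (by decide)
  linear_combination (norm := (ring_nf; reduce_mod_char))
    hx 1 2 3 4 (by simp) + hx 0 2 3 4 (by simp) + hx 0 1 3 4 (by simp) + hx 0 1 2 4 (by simp) +
    hx 0 1 2 3 (by simp)

theorem not_vanKampenTrivial_completeBipartiteGraph_three_three :
    ¬ VanKampenTrivial (completeBipartiteGraph (Fin 3) (Fin 3)) := by
  intro h
  obtain ⟨x, o, hxo⟩ := h.exists_sum_fourCycle
  have hx (i j k l : Fin 3) (hij : i ≠ j) (hkl : k ≠ l) :=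
    hxo (.inl i) (.inl j) (.inr k) (.inr l) (by simpa) (by simpa) (by simp) (by simp) (by simp)
      (by simp)
  refine absurd (?_ : (9 : ZMod 2) = 0) (by decide)
  linear_combination (norm := (ring_nf; reduce_mod_char))
    hx 0 1 0 1 (by decide) (by decide) + hx 0 1 0 2 (by decide) (by decide) +
    hx 0 1 1 2 (by decide) (by decide) + hx 0 2 0 1 (by decide) (by decide) +
    hx 0 2 0 2 (by decide) (by decide) + hx 0 2 1 2 (by decide) (by decide) +
    hx 1 2 0 1 (by decide) (by decide) + hx 1 2 0 2 (by decide) (by decide) +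
    hx 1 2 1 2 (by decide) (by decide)

theorem VanKampenTrivial.cliqueFree_five (hG : VanKampenTrivial G) : G.CliqueFree 5 :=
  cliqueFree_iff_top_free.2 fun h ↦ not_vanKampenTrivial_top_fin_five (hG.of_isContained h)

theorem VanKampenTrivial.completeBipartiteGraph_three_three_free (hG : VanKampenTrivial G) :
    (completeBipartiteGraph (Fin 3) (Fin 3)).Free G :=
  fun h ↦ not_vanKampenTrivial_completeBipartiteGraph_three_three (hG.of_isContained h)

end VanKampen

/-- The graph obtained from `G` by contracting an edge `p q` to the vertex `p`. The other end `q`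
remains in the vertex type, as an isolated vertex. -/
def contractEdge {V : Type*} [DecidableEq V] (G : SimpleGraph V) (p q : V) : SimpleGraph V :=
  G.map (Function.update id q p)

section ContractEdge

variable {V : Type*} [DecidableEq V] {G : SimpleGraph V} {p q u v : V}

theorem contractEdge_adj (hpq : p ≠ q) : (contractEdge G p q).Adj u v ↔
    u ≠ v ∧ u ≠ q ∧ v ≠ q ∧ (G.Adj u v ∨ u = p ∧ G.Adj q v ∨ v = p ∧ G.Adj q u) := by
  simp only [contractEdge, map_adj', Function.update_apply, id]
  grind [SimpleGraph.adj_comm, SimpleGraph.ne_of_adj]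

theorem support_contractEdge_subset (hpq : G.Adj p q) :
    (contractEdge G p q).support ⊆ G.support \ {q} := by
  rintro u ⟨v, huv⟩
  obtain ⟨-, huq, -, h | ⟨rfl, -⟩ | ⟨-, h⟩⟩ := (contractEdge_adj hpq.ne).1 huv
  exacts [⟨⟨v, h⟩, huq⟩, ⟨⟨q, hpq⟩, huq⟩, ⟨⟨q, h.symm⟩, huq⟩]

theorem VanKampenTrivial.contractEdge_of_adj (hG : VanKampenTrivial G) (hpq : G.Adj p q) :
    VanKampenTrivial (contractEdge G p q) := by
  classical
  obtain ⟨x, o, ho, hx⟩ := hG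
  have adj_cases {u v : V} (huv : (contractEdge G p q).Adj u v) :=
    (contractEdge_adj hpq.ne).1 huv
  -- An edge `p v` that comes from `q v` is drawn along `p q` and then along `q v`.
  let y (e : Sym2 V) (a : V) : ZMod 2 :=
    if e ∈ G.edgeSet then x e a else x s(p, q) a + x (e.map (Equiv.swap p q)) a
  have y_of_adj {u v : V} (huv : G.Adj u v) (a : V) : y s(u, v) a = x s(u, v) a := if_pos huv
  have y_of_not_adj {v : V} (hvp : v ≠ p) (hvq : v ≠ q) (hpv : ¬ G.Adj p v) (a : V) :
      y s(p, v) a = x s(p, q) a + x s(q, v) a := by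
    simp [y, hpv, Equiv.swap_apply_of_ne_of_ne hvp hvq]
  have detour {v a b : V} (hpv : ¬ G.Adj p v) (hvp : v ≠ p) (hqv : G.Adj q v) (hab : G.Adj a b)
      (haq : q ≠ a) (hbq : q ≠ b) (hpa : p ≠ a) (hpb : p ≠ b) (hva : v ≠ a) (hvb : v ≠ b) :
      VanKampenEquation y o p v a b := by
    simp only [VanKampenEquation, y_of_not_adj hvp hqv.ne' hpv, y_of_adj hab]
    linear_combination (norm := (ring_nf; reduce_mod_char))
      hx p q a b hpq hab hpa hpb haq hbq + hx q v a b hqv hab haq hbq hva hvb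
  have of_adj {u v a b : V} (huv : (contractEdge G p q).Adj u v) (hab : G.Adj a b)
      (haq : q ≠ a) (hbq : q ≠ b) (hua : u ≠ a) (hub : u ≠ b) (hva : v ≠ a) (hvb : v ≠ b) :
      VanKampenEquation y o u v a b := by
    by_cases huvG : G.Adj u v
    · simpa only [VanKampenEquation, y_of_adj huvG, y_of_adj hab] using
        hx u v a b huvG hab hua hub hva hvb
    obtain ⟨hne, -, -, h | ⟨rfl, hqv⟩ | ⟨rfl, hqu⟩⟩ := adj_cases huv
    · exact absurd h huvG
    · exact detour huvG hne.symm hqv hab haq hbq hua hub hva hvb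
    · exact (detour (fun h ↦ huvG h.symm) hne hqu hab haq hbq hva hvb hua hub).swap_left
  refine ⟨y, o, ho, fun u v a b huv hab hua hub hva hvb ↦ ?_⟩
  by_cases habG : G.Adj a b
  · exact of_adj huv habG (adj_cases hab).2.1.symm (adj_cases hab).2.2.1.symm hua hub hva hvb
  by_cases huvG : G.Adj u v
  · exact (of_adj hab huvG (adj_cases huv).2.1.symm (adj_cases huv).2.2.1.symm hua.symm hva.symm
      hub.symm hvb.symm).symm ho hua.symm hva.symm hub.symm hvb.symm
  · grind

theorem ncard_edgeSet_le_contractEdge [Finite V] (hpq : p ≠ q) : G.edgeSet.ncard ≤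
    (contractEdge G p q).edgeSet.ncard + (G.commonNeighbors p q).ncard + 1 := by
  let f : Sym2 V → Sym2 V := Sym2.map (Function.update id q p)
  let B : Set (Sym2 V) := insert s(p, q) ((s(q, ·)) '' G.commonNeighbors p q)
  have hB : B.ncard ≤ (G.commonNeighbors p q).ncard + 1 :=
    (Set.ncard_insert_le _ _).trans (Nat.add_le_add_right (Set.ncard_image_le (Set.toFinite _)) 1)
  have mem_sdiff_iff (u v : V) : s(u, v) ∈ G.edgeSet \ B ↔ G.Adj u v ∧ s(u, v) ≠ s(p, q) ∧
      ∀ w, G.Adj p w → G.Adj q w → s(q, w) ≠ s(u, v) := by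
    simp [B, mem_commonNeighbors]
  have hmaps : ∀ e ∈ G.edgeSet \ B, f e ∈ (contractEdge G p q).edgeSet := by
    rintro ⟨u, v⟩ huv
    rw [mem_sdiff_iff] at huv
    simp only [f, Sym2.map_mk, mem_edgeSet, contractEdge_adj hpq, Function.update_apply, id]
    grind [SimpleGraph.adj_comm, SimpleGraph.ne_of_adj]
  have hinj : Set.InjOn f (G.edgeSet \ B) := by
    rintro ⟨u, v⟩ huv ⟨a, b⟩ hab h
    rw [mem_sdiff_iff] at huv hab
    simp only [f, Sym2.map_mk, Function.update_apply, id] at h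
    grind [SimpleGraph.adj_comm, SimpleGraph.ne_of_adj]
  have := Set.ncard_le_ncard_of_injOn _ hmaps hinj
  have := Set.ncard_le_ncard_sdiff_add_ncard G.edgeSet B
  omega

end ContractEdge

section EdgeBound

variable {V : Type*} {G : SimpleGraph V}

theorem exists_le_ncard_edgeSet_eq {k : ℕ} (hk : k ≤ G.edgeSet.ncard) :
    ∃ H ≤ G, H.edgeSet.ncard = k := by
  obtain ⟨E, hE, rfl⟩ := Set.exists_subset_card_eq hk
  have hEdge : (fromEdgeSet E).edgeSet = E := by
    rw [edgeSet_fromEdgeSet, sdiff_eq_left, ← Set.subset_compl_iff_disjoint_right]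
    exact hE.trans G.edgeSet_subset_compl_diagSet
  exact ⟨fromEdgeSet E, (fromEdgeSet_le G).2 (Set.sdiff_subset.trans hE), by rw [hEdge]⟩

theorem ncard_edgeSet_le_choose_two {S : Finset V} (hS : G.support ⊆ S) :
    G.edgeSet.ncard ≤ S.card.choose 2 := by
  classical
  rw [← Sym2.card_image_offDiag, ← Set.ncard_coe_finset]
  refine Set.ncard_le_ncard ?_ (Finset.finite_toSet _)
  rintro ⟨u, v⟩ huv
  have huv : G.Adj u v := huv
  exact Finset.mem_image.2 ⟨(u, v), Finset.mem_offDiag.2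
    ⟨hS ⟨v, huv⟩, hS ⟨u, huv.symm⟩, huv.ne⟩, rfl⟩

variable [Fintype V] [DecidableRel G.Adj]

theorem ncard_edgeSet_eq_card_edgeFinset : G.edgeSet.ncard = G.edgeFinset.card :=
  Set.ncard_eq_toFinset_card' _

theorem ncard_edgeSet_deleteIncidenceSet (v : V) :
    (G.deleteIncidenceSet v).edgeSet.ncard = G.edgeSet.ncard - G.degree v := by
  classical
  simp only [ncard_edgeSet_eq_card_edgeFinset, card_edgeFinset_deleteIncidenceSet]

theorem exists_degree_lt {S : Finset V} {d : ℕ} (hd : 2 * G.edgeSet.ncard < S.card * d) :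
    ∃ v ∈ S, G.degree v < d := by
  by_contra! h
  refine hd.not_ge ?_
  rw [ncard_edgeSet_eq_card_edgeFinset, ← sum_degrees_eq_twice_card_edges]
  exact (Finset.card_nsmul_le_sum S _ d h).trans
    (Finset.sum_le_sum_of_subset (Finset.subset_univ S))

theorem exists_not_adj_of_cliqueFree_succ {n : ℕ} (hG : G.CliqueFree (n + 1)) {v : V}
    (hv : n ≤ G.degree v) : ∃ a b, G.Adj v a ∧ G.Adj v b ∧ a ≠ b ∧ ¬ G.Adj a b := by
  classical
  by_contra! hclique
  obtain ⟨T, hTN, hT⟩ := Finset.exists_subset_card_eq hv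
  have adj_of_mem {w : V} (hw : w ∈ T) : G.Adj v w := (mem_neighborFinset ..).1 (hTN hw)
  exact hG _ (IsNClique.insert
    ⟨fun x hx y hy ↦ hclique x y (adj_of_mem hx) (adj_of_mem hy), hT⟩ fun _ ↦ adj_of_mem)

theorem exists_ncard_commonNeighbors_le_two (hK5 : G.CliqueFree 5)
    (hK33 : (completeBipartiteGraph (Fin 3) (Fin 3)).Free G) {v : V} (hv4 : 4 ≤ G.degree v)
    (hv5 : G.degree v ≤ 5) : ∃ w, G.Adj w v ∧ (G.commonNeighbors w v).ncard ≤ 2 := by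
  classical
  by_contra! hcommon
  obtain ⟨a, b, hva, hvb, hab, hab'⟩ := exists_not_adj_of_cliqueFree_succ hK5 hv4
  let R : Finset V := ((G.neighborFinset v).erase a).erase b
  have hR : R.card ≤ 3 := by
    rw [Finset.card_erase_of_mem (by simpa using ⟨hab.symm, hvb⟩),
      Finset.card_erase_of_mem (by simpa using hva), card_neighborFinset_eq_degree]
    omega
  have commonNeighbors_eq {w : V} (hw : G.Adj w v) (hwa : ¬ G.Adj w a) (hwb : ¬ G.Adj w b) :
      G.commonNeighbors w v = R := by
    refine Set.eq_of_subset_of_ncard_le (fun z hz ↦ ?_) ?_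
    · have hz : G.Adj w z ∧ G.Adj v z := hz
      simp only [R, Finset.coe_erase, Set.mem_sdiff, Set.mem_singleton_iff, Finset.mem_coe,
        mem_neighborFinset]
      exact ⟨⟨hz.2, fun h ↦ hwa (h ▸ hz.1)⟩, fun h ↦ hwb (h ▸ hz.1)⟩
    · rw [Set.ncard_coe_finset]
      exact hR.trans (hcommon w hw)
  have hRa := commonNeighbors_eq hva.symm G.irrefl hab'
  have hRb := commonNeighbors_eq hvb.symm (fun h ↦ hab' h.symm) G.irrefl
  refine hK33 (completeBipartiteGraph_isContained_iff.2 ⟨{v, a, b}, R, ?_, ?_, ?_⟩)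
  · rw [Fintype.card_fin, Finset.card_eq_three]
    exact ⟨v, a, b, hva.ne, hvb.ne, hab, rfl⟩
  · rw [Fintype.card_fin]
    refine le_antisymm hR ?_
    rw [← Set.ncard_coe_finset, ← hRa]
    exact hcommon a hva.symm
  · intro w hw z hz
    have hza : G.Adj a z ∧ G.Adj v z := (hRa ▸ hz :)
    have hzb : G.Adj b z ∧ G.Adj v z := (hRb ▸ hz :)
    simp only [Finset.coe_insert, Finset.coe_singleton, Set.mem_insert_iff,
      Set.mem_singleton_iff] at hw
    rcases hw with rfl | rfl | rfl
    exacts [hza.2, hza.1, hzb.1]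

end EdgeBound

theorem VanKampenTrivial.ncard_edgeSet_add_six_le {V : Type*} [Finite V] {G : SimpleGraph V}
    (hG : VanKampenTrivial G) {S : Finset V} (hS : G.support ⊆ S) (hS3 : 3 ≤ S.card) :
    G.edgeSet.ncard + 6 ≤ 3 * S.card := by
  classical
  cases nonempty_fintype V
  induction S using Finset.strongInduction generalizing G with | H S ih
  obtain hS3 | hS4 := hS3.eq_or_lt
  · have := ncard_edgeSet_le_choose_two hS
    rw [← hS3] at this ⊢
    exact Nat.add_le_add_right this 6
  by_contra! hmany
  obtain ⟨H, hHG, hHcard⟩ := exists_le_ncard_edgeSet_eq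
    (show 3 * S.card - 5 ≤ G.edgeSet.ncard by omega)
  have hH : VanKampenTrivial H := hG.of_isContained (.of_le hHG)
  have hHS : H.support ⊆ S := (support_mono hHG).trans hS
  obtain ⟨v, hvS, hv⟩ : ∃ v ∈ S, H.degree v < 6 := exists_degree_lt (by omega)
  have smaller {H' : SimpleGraph V} (hH' : VanKampenTrivial H')
      (hsupp : H'.support ⊆ H.support \ {v}) : H'.edgeSet.ncard + 9 ≤ 3 * S.card := by
    have := ih (S.erase v) (Finset.erase_ssubset hvS) hH'
      (by rw [Finset.coe_erase]; exact hsupp.trans (Set.sdiff_subset_sdiff_left hHS))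
      (by rw [Finset.card_erase_of_mem hvS]; omega)
    rw [Finset.card_erase_of_mem hvS] at this
    omega
  have hdelete := smaller (hH.of_isContained (.of_le (H.deleteIncidenceSet_le v)))
    (H.support_deleteIncidenceSet_subset v)
  rw [ncard_edgeSet_deleteIncidenceSet] at hdelete
  obtain ⟨w, hwv, hw⟩ := exists_ncard_commonNeighbors_le_two hH.cliqueFree_five
    hH.completeBipartiteGraph_three_three_free (v := v) (by omega) (by omega)
  have hcontract := smaller (hH.contractEdge_of_adj hwv) (support_contractEdge_subset hwv)
  have := ncard_edgeSet_le_contractEdge (G := H) hwv.ne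
  omega

theorem IsPlanar.ncard_edgeSet_add_six_le {V : Type*} [Fintype V] {G : SimpleGraph V}
    (hG : IsPlanar G) (hV : 3 ≤ Fintype.card V) :
    G.edgeSet.ncard + 6 ≤ 3 * Fintype.card V :=
  hG.vanKampenTrivial.ncard_edgeSet_add_six_le (S := Finset.univ) (by simp) hV

section StraightLine

/-- Twice the signed area of the triangle `a b c`; it is positive exactly if the triangle is
oriented counterclockwise. -/
def orientation {R : Type*} [CommRing R] (a b c : R × R) : R :=
  (b.1 - a.1) * (c.2 - a.2) - (b.2 - a.2) * (c.1 - a.1)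

theorem orientation_intCast {R : Type*} [CommRing R] (a b c : ℤ × ℤ) :
    orientation (a.map Int.cast Int.cast : R × R) (b.map Int.cast Int.cast)
      (c.map Int.cast Int.cast) = (orientation a b c : ℤ) := by
  simp [orientation]

section CommRing

variable {R : Type*} [CommRing R]

theorem orientation_self_left (a b : R × R) : orientation a b a = 0 := by
  simp [orientation]

theorem orientation_self_right (a b : R × R) : orientation a b b = 0 := by
  rw [orientation]; ring

theorem orientation_lineMap (a b c d : R × R) (t : R) :
    orientation a b (AffineMap.lineMap c d t) =
      (1 - t) * orientation a b c + t * orientation a b d := by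
  simp only [orientation, AffineMap.lineMap_apply_module, Prod.fst_add, Prod.snd_add,
    Prod.smul_fst, Prod.smul_snd, smul_eq_mul]
  ring

theorem orientation_lineMap_self (a b : R × R) (t : R) :
    orientation a b (AffineMap.lineMap a b t) = 0 := by
  rw [orientation_lineMap, orientation_self_left, orientation_self_right]; ring

end CommRing

/-- The points `c` and `d` lie strictly on one side of the line `a b`, or `a` and `b` lie strictly
on one side of the line `c d`; in both cases the segments `a b` and `c d` are disjoint. -/
def SegmentsSeparated {R : Type*} [CommRing R] [LinearOrder R] (a b c d : R × R) : Prop :=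
  0 < orientation a b c * orientation a b d ∨ 0 < orientation c d a * orientation c d b

theorem SegmentsSeparated.lineMap_ne {R : Type*} [CommRing R] [LinearOrder R]
    [IsStrictOrderedRing R] {a b c d : R × R} (h : SegmentsSeparated a b c d) {s t : R}
    (hs : s ∈ Set.Icc 0 1) (ht : t ∈ Set.Icc 0 1) :
    AffineMap.lineMap a b s ≠ (AffineMap.lineMap c d t : R × R) := by
  have convex_ne_zero {x y r : R} (hr : r ∈ Set.Icc 0 1) (hxy : 0 < x * y) :
      (1 - r) * x + r * y ≠ 0 := by
    have hr' := sub_nonneg.2 hr.2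
    rcases pos_and_pos_or_neg_and_neg_of_mul_pos hxy with ⟨hx, hy⟩ | ⟨hx, hy⟩
    · exact (convex_Ioi (0 : R) hx hy hr' hr.1 (sub_add_cancel 1 r)).ne'
    · exact (convex_Iio (0 : R) hx hy hr' hr.1 (sub_add_cancel 1 r)).ne
  intro heq
  rcases h with h | h
  · refine convex_ne_zero ht h ?_
    rw [← orientation_lineMap, ← heq, orientation_lineMap_self]
  · refine convex_ne_zero hs h ?_
    rw [← orientation_lineMap, heq, orientation_lineMap_self]

/-- The vertex placement `P` turns the segments between adjacent vertices into a plane drawing of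
`G`, as witnessed by orientations: no vertex lies on the line through two adjacent other ones, and
edges without a common end are separated. -/
structure IsStraightLineDrawing {V R : Type*} [CommRing R] [LinearOrder R] (G : SimpleGraph V)
    (P : V → R × R) : Prop where
  injective : Function.Injective P
  orientation_ne_zero : ∀ ⦃u v⦄, G.Adj u v → ∀ w, w ≠ u → w ≠ v →
    orientation (P u) (P v) (P w) ≠ 0
  segmentsSeparated : ∀ ⦃u v⦄, G.Adj u v → ∀ ⦃a b⦄, G.Adj a b → a ≠ u → a ≠ v → b ≠ u → b ≠ v →
    SegmentsSeparated (P u) (P v) (P a) (P b)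

namespace IsStraightLineDrawing

open AffineMap (lineMap lineMap_apply_zero lineMap_apply_one lineMap_apply_one_sub)

variable {V : Type*} {G : SimpleGraph V} {u v a b : V}

theorem intCast {P : V → ℤ × ℤ} (h : IsStraightLineDrawing G P) {R : Type*} [CommRing R]
    [LinearOrder R] [IsStrictOrderedRing R] :
    IsStraightLineDrawing G fun v ↦ ((P v).map Int.cast Int.cast : R × R) where
  injective := (Int.cast_injective.prodMap Int.cast_injective).comp h.injective
  orientation_ne_zero _ _ huv w hwu hwv := by
    rw [orientation_intCast]
    exact_mod_cast h.orientation_ne_zero huv w hwu hwv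
  segmentsSeparated _ _ huv _ _ hab hau hav hbu hbv := by
    simp only [SegmentsSeparated, orientation_intCast]
    exact_mod_cast h.segmentsSeparated huv hab hau hav hbu hbv

variable {P : V → ℝ × ℝ}

theorem eq_or_eq_of_lineMap_eq (h : IsStraightLineDrawing G P) (huv : G.Adj u v) {t : ℝ} {w : V}
    (hw : lineMap (P u) (P v) t = P w) : w = u ∨ w = v := by
  by_contra! hne
  exact h.orientation_ne_zero huv w hne.1 hne.2 (hw ▸ orientation_lineMap_self _ _ t)

theorem lineMap_mem_range_of_common_left (h : IsStraightLineDrawing G P) (huv : G.Adj u v)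
    (ha : a = u ∨ a = v) (hbu : b ≠ u) (hbv : b ≠ v) {s t : ℝ}
    (hst : lineMap (P u) (P v) s = lineMap (P a) (P b) t) :
    lineMap (P a) (P b) t ∈ Set.range P := by
  have ha0 : orientation (P u) (P v) (P a) = 0 := by
    rcases ha with rfl | rfl
    exacts [orientation_self_left _ _, orientation_self_right _ _]
  have ht := orientation_lineMap (P u) (P v) (P a) (P b) t
  rw [← hst, orientation_lineMap_self, ha0, mul_zero, zero_add, zero_eq_mul] at ht
  rw [ht.resolve_right (h.orientation_ne_zero huv b hbu hbv), lineMap_apply_zero]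
  exact Set.mem_range_self a

theorem lineMap_mem_range (h : IsStraightLineDrawing G P) (huv : G.Adj u v) (hab : G.Adj a b)
    (hne : s(u, v) ≠ s(a, b)) {s t : ℝ} (hs : s ∈ Set.Icc 0 1) (ht : t ∈ Set.Icc 0 1)
    (hst : lineMap (P u) (P v) s = lineMap (P a) (P b) t) :
    lineMap (P a) (P b) t ∈ Set.range P := by
  by_cases ha : a = u ∨ a = v
  · have hb : b ≠ u ∧ b ≠ v := by grind [SimpleGraph.ne_of_adj]
    exact h.lineMap_mem_range_of_common_left huv ha hb.1 hb.2 hst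
  push Not at ha
  by_cases hb : b = u ∨ b = v
  · rw [← lineMap_apply_one_sub (P b) (P a)] at hst ⊢
    exact h.lineMap_mem_range_of_common_left huv hb ha.1 ha.2 hst
  push Not at hb
  exact absurd hst ((h.segmentsSeparated huv hab ha.1 ha.2 hb.1 hb.2).lineMap_ne hs ht)

theorem isPlanar (h : IsStraightLineDrawing G P) : IsPlanar G := by
  have exists_ends (e : G.edgeSet) : ∃ u v, (e : Sym2 V) = s(u, v) ∧ G.Adj u v := by
    obtain ⟨⟨u, v⟩, huv⟩ := e
    exact ⟨u, v, rfl, huv⟩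
  choose x y he hxy using exists_ends
  have arc_injective (e : G.edgeSet) :
      Function.Injective (lineMap (P (x e)) (P (y e)) : ℝ → ℝ × ℝ) :=
    AffineMap.lineMap_injective ℝ (h.injective.ne (hxy e).ne)
  refine ⟨P, fun e t ↦ lineMap (P (x e)) (P (y e)) (t : ℝ), h.injective, fun e ↦ ?_,
    fun e ↦ ⟨x e, y e, he e, lineMap_apply_zero _ _, lineMap_apply_one _ _⟩,
    fun e ↦ (arc_injective e).comp Subtype.val_injective, fun e t ht0 ht1 w hw ↦ ?_,
    fun e e' hne s t hst ↦ ?_⟩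
  · exact AffineMap.lineMap_continuous.comp continuous_subtype_val
  · rcases h.eq_or_eq_of_lineMap_eq (hxy e) hw with rfl | rfl
    · exact ht0 (arc_injective e (hw.trans (lineMap_apply_zero _ _).symm))
    · exact ht1 (arc_injective e (hw.trans (lineMap_apply_one _ _).symm))
  · have hends : s(x e, y e) ≠ s(x e', y e') := by
      rw [← he, ← he]
      exact Subtype.coe_injective.ne hne
    exact hst ▸ h.lineMap_mem_range (hxy e) (hxy e') hends s.2 t.2 hst

end IsStraightLineDrawing

end StraightLine

section Thickness

variable {V W : Type*} {G : SimpleGraph V} {H : SimpleGraph W}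

theorem IsPlanar.of_isContained (hG : IsPlanar G) (hHG : H ⊑ G) : IsPlanar H := by
  obtain ⟨P, γ, hP, hcont, hends, hinj, havoid, hmeet⟩ := hG
  obtain ⟨φ⟩ := hHG
  have ends (e : H.edgeSet) : ∃ u v, (e : Sym2 W) = s(u, v) ∧
      γ (φ.mapEdgeSet e) ⟨0, by norm_num⟩ = P (φ u) ∧
      γ (φ.mapEdgeSet e) ⟨1, by norm_num⟩ = P (φ v) := by
    obtain ⟨x, y, hxy, h0, h1⟩ := hends (φ.mapEdgeSet e)
    rw [h0, h1]
    obtain ⟨⟨u, v⟩, huv⟩ := e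
    obtain ⟨rfl, rfl⟩ | ⟨rfl, rfl⟩ := Sym2.eq_iff.1 hxy
    exacts [⟨u, v, rfl, rfl, rfl⟩, ⟨v, u, Sym2.eq_swap, rfl, rfl⟩]
  refine ⟨P ∘ φ, γ ∘ φ.mapEdgeSet, hP.comp φ.injective, fun e ↦ hcont _, ends, fun e ↦ hinj _,
    fun e t ht0 ht1 v ↦ havoid _ t ht0 ht1 (φ v), fun e e' hne s t hst ↦ ?_⟩
  obtain ⟨z, hz⟩ := hmeet _ _ (φ.mapEdgeSet.injective.ne hne) s t hst
  obtain ⟨u, v, -, h0, h1⟩ := ends e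
  by_cases hs0 : (s : ℝ) = 0
  · obtain rfl : s = ⟨0, by norm_num⟩ := Subtype.ext hs0
    exact ⟨u, h0.symm⟩
  by_cases hs1 : (s : ℝ) = 1
  · obtain rfl : s = ⟨1, by norm_num⟩ := Subtype.ext hs1
    exact ⟨v, h1.symm⟩
  exact absurd hz.symm (havoid _ s hs0 hs1 z)

/-- `G` is the union of `n` planar subgraphs; `thickness G` is the least such `n`. -/
def HasPlanarDecomposition (G : SimpleGraph V) (n : ℕ) : Prop :=
  ∃ H : Fin n → SimpleGraph V, (∀ i, H i ≤ G) ∧ (∀ i, IsPlanar (H i)) ∧ ⨆ i, H i = G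

theorem HasPlanarDecomposition.of_isContained {n : ℕ} (hG : HasPlanarDecomposition G n)
    (hHG : H ⊑ G) : HasPlanarDecomposition H n := by
  obtain ⟨L, -, hL, hsup⟩ := hG
  obtain ⟨φ⟩ := hHG
  refine ⟨fun i ↦ H ⊓ (L i).comap φ, fun i ↦ inf_le_left, fun i ↦ (hL i).of_isContained
    ⟨⟨⟨φ, fun h ↦ h.2⟩, φ.injective⟩⟩, le_antisymm (iSup_le fun i ↦ inf_le_left) ?_⟩
  intro u v huv
  obtain ⟨i, hi⟩ : ∃ i, (L i).Adj (φ u) (φ v) := by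
    rw [← iSup_adj, hsup]
    exact φ.toHom.map_adj huv
  exact iSup_adj.2 ⟨i, huv, hi⟩

theorem thickness_congr (e : H ≃g G) : thickness H = thickness G :=
  congrArg sInf <| Set.ext fun _ ↦
    ⟨fun h ↦ HasPlanarDecomposition.of_isContained h ⟨e.symm.toCopy⟩,
      fun h ↦ HasPlanarDecomposition.of_isContained h ⟨e.toCopy⟩⟩

theorem HasPlanarDecomposition.ncard_edgeSet_le [Fintype V] {n : ℕ}
    (hG : HasPlanarDecomposition G n) (hV : 3 ≤ Fintype.card V) :
    G.edgeSet.ncard ≤ n * (3 * Fintype.card V - 6) := by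
  obtain ⟨L, -, hL, rfl⟩ := hG
  calc (⨆ i, L i).edgeSet.ncard ≤ ∑ i, (L i).edgeSet.ncard := by
        rw [edgeSet_iSup]; exact Set.ncard_iUnion_le_of_fintype _
    _ ≤ ∑ _ : Fin n, (3 * Fintype.card V - 6) :=
        Finset.sum_le_sum fun i _ ↦ Nat.le_sub_of_add_le ((hL i).ncard_edgeSet_add_six_le hV)
    _ = n * (3 * Fintype.card V - 6) := by simp

end Thickness

section Decomposition

theorem nonempty_completeMultipartiteGraph_iso {V ι : Type*} {A : ι → Type*} {f : V → ι}
    (h : ∀ i, Nonempty (A i ≃ {v // f v = i})) :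
    Nonempty (completeMultipartiteGraph A ≃g (⊤ : SimpleGraph ι).comap f) := by
  let e : (Σ i, A i) ≃ V :=
    (Equiv.sigmaCongrRight fun i ↦ (h i).some).trans (Equiv.sigmaFiberEquiv f)
  have part_eq (x : Σ i, A i) : f (e x) = x.1 := ((h x.1).some x.2).2
  exact ⟨⟨e, fun {x y} ↦ by simp [part_eq]⟩⟩

/-- The part of each vertex in a copy of `K_{2,9,9}` on `Fin 20`: the parts of size nine are the
even and the odd numbers below `18`. -/
def K299.part (v : Fin 20) : Fin 3 :=
  if 18 ≤ v then 0 else if Even v.val then 1 else 2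

/-- A copy of `K_{2,9,9}` on the vertices `Fin 20`. -/
abbrev K299 : SimpleGraph (Fin 20) := (⊤ : SimpleGraph (Fin 3)).comap K299.part

namespace K299

/-- Rotation by `k` thirds of a full turn of the cycle formed by the vertices below `18`. The step
is even, so it preserves the parts. -/
def turn (k : Fin 3) (v : Fin 20) : Fin 20 :=
  if 18 ≤ v then v else Fin.ofNat 20 ((v + 6 * k) % 18)

/-- A planar graph whose images under the three turns cover `K_{2,9,9}`, given by the list of
larger neighbors of each vertex. -/
def layer : SimpleGraph (Fin 20) :=
  fromRel fun u v ↦ v ∈ (![[5, 18], [10, 12], [3, 7, 18], [8, 12, 18], [5, 7, 18],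
    [8, 10, 14, 16, 18], [7, 17, 19], [12, 14, 18, 19], [15], [10, 12, 16, 19], [15], [12], [15],
    [14, 16], [17, 19], [], [19], [19], [], []] u : List (Fin 20))

instance : DecidableRel layer.Adj := inferInstanceAs (DecidableRel (fromRel _).Adj)

/-- The vertices of a straight-line drawing of `layer`. -/
def layerPoint : Fin 20 → ℤ × ℤ :=
  ![(17, 5), (8, 9), (16, 5), (13, 6), (4, 20), (6, 17), (1, 3), (0, 0), (9, 13), (7, 10),
    (7, 11), (11, 6), (5, 2), (5, 12), (4, 15), (11, 8), (6, 10), (2, 3), (20, 4), (3, 2)]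

theorem isStraightLineDrawing_layerPoint : IsStraightLineDrawing layer layerPoint where
  injective := by decide +kernel
  orientation_ne_zero := by decide +kernel
  segmentsSeparated := by unfold SegmentsSeparated; decide +kernel

theorem turn_injective : ∀ k, Function.Injective (turn k) := by
  decide +kernel

theorem iSup_layer_comap_turn : ⨆ k, layer.comap (turn k) = K299 := by
  ext u v
  rw [iSup_adj]
  revert u v
  decide +kernel

theorem hasPlanarDecomposition : HasPlanarDecomposition K299 3 :=
  ⟨fun k ↦ layer.comap (turn k),
    fun k ↦ (le_iSup (fun k ↦ layer.comap (turn k)) k).trans_eq iSup_layer_comap_turn,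
    fun k ↦ isStraightLineDrawing_layerPoint.intCast.isPlanar.of_isContained
      ⟨⟨⟨turn k, id⟩, turn_injective k⟩⟩,
    iSup_layer_comap_turn⟩

theorem ncard_edgeSet : K299.edgeSet.ncard = 117 := by
  have : ∑ v, K299.degree v = 2 * 117 := by decide +kernel
  rw [sum_degrees_eq_twice_card_edges] at this
  rw [ncard_edgeSet_eq_card_edgeFinset]
  omega

end K299

end Decomposition

theorem thickness_K299 :
    thickness (completeMultipartiteGraph ![Fin 2, Fin 9, Fin 9]) = 3 := by
  obtain ⟨e⟩ : Nonempty (completeMultipartiteGraph ![Fin 2, Fin 9, Fin 9] ≃g K299) :=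
    nonempty_completeMultipartiteGraph_iso fun
      | 0 => ⟨Fintype.equivOfCardEq (α := Fin 2) (by decide)⟩
      | 1 | 2 => ⟨Fintype.equivOfCardEq (α := Fin 9) (by decide)⟩
  rw [thickness_congr e]
  refine le_antisymm (Nat.sInf_le K299.hasPlanarDecomposition)
    (le_csInf ⟨3, K299.hasPlanarDecomposition⟩ fun n hn ↦ ?_)
  have := HasPlanarDecomposition.ncard_edgeSet_le hn (by simp)
  rw [K299.ncard_edgeSet, Fintype.card_fin] at this
  omega
end

section
/- The thickness of the complete tripartite graph K_{2,13,13} equals 4. -/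
open SimpleGraph

/-!
A triangle-free planar graph has at most `2 * V` edges, so `n` planar graphs on 28 vertices cover
at most `56 * n` edges of the complete bipartite graph between the two parts of size 13. It has 169
edges, whence `4 ≤ n`. Conversely, four explicit straight-line drawings cover `K_{2,13,13}`.

The edge bound avoids the Jordan curve theorem and Euler's formula. At a fine enough resolution the
lattice points near a plane drawing exhibit the graph as a minor of the square grid `ℤ × ℤ`. The
grid has an abstract dual in the sense of Whitney, by the winding parity of its mod-2 cycles, and
having one is inherited by minors. The faces of an abstract dual give a generating set of the cycle
space that covers every edge at most twice (MacLane). In a triangle-free graph every nonzero cycle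
has at least four edges, so counting incidences bounds the dimension of the cycle space by `E / 2`,
while this dimension is at least `E - V`.
-/

/-! ### Mod-2 cycles and abstract duals -/

section Chains

variable {V V' E E' F : Type*}

/-- The mod-2 boundary of a 1-chain in the multigraph whose edge `e` joins `(ends e).1` to
`(ends e).2`. -/
noncomputable def boundary (ends : E → V × V) : (E →₀ ZMod 2) →ₗ[ZMod 2] (V →₀ ZMod 2) :=
  Finsupp.linearCombination (ZMod 2) fun e =>
    Finsupp.single (ends e).1 1 + Finsupp.single (ends e).2 1

theorem boundary_single (ends : E → V × V) (e : E) :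
    boundary ends (Finsupp.single e 1) =
      Finsupp.single (ends e).1 1 + Finsupp.single (ends e).2 1 := by
  simp [boundary]

theorem boundary_mapDomain (ends : E → V × V) (l : E' → E) (C : E' →₀ ZMod 2) :
    boundary ends (C.mapDomain l) = boundary (ends ∘ l) C :=
  Finsupp.linearCombination_mapDomain (ZMod 2) l C

theorem mapDomain_boundary (π : V → V') (ends : E → V × V) (c : E →₀ ZMod 2) :
    (boundary ends c).mapDomain π = boundary (Prod.map π π ∘ ends) c := by
  suffices h : Finsupp.lmapDomain (ZMod 2) (ZMod 2) π ∘ₗ boundary ends =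
      boundary (Prod.map π π ∘ ends) from LinearMap.congr_fun h c
  refine Finsupp.lhom_ext' fun e => LinearMap.ext_ring ?_
  simp [boundary_single, Finsupp.mapDomain_add, Finsupp.mapDomain_single]

theorem boundary_eq_boundary_comapDomain (ends : E → V × V) {l : E' → E}
    (hl : Function.Injective l) (hloop : ∀ e ∉ Set.range l, (ends e).1 = (ends e).2)
    (c : E →₀ ZMod 2) :
    boundary ends c = boundary (ends ∘ l) (c.comapDomain l hl.injOn) := by
  classical
  suffices h : boundary ends = boundary (ends ∘ l) ∘ₗ Finsupp.lcomapDomain (R := ZMod 2) l hl from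
    LinearMap.congr_fun h c
  refine Finsupp.lhom_ext' fun e => LinearMap.ext_ring ?_
  by_cases he : e ∈ Set.range l
  · obtain ⟨e', rfl⟩ := he
    have h : Finsupp.lcomapDomain (R := ZMod 2) l hl (Finsupp.single (l e') (1 : ZMod 2)) =
        Finsupp.single e' 1 :=
      Finsupp.comapDomain_single _ _ _ _
    simp [h, boundary_single]
  · have h : Finsupp.lcomapDomain (R := ZMod 2) l hl (Finsupp.single e (1 : ZMod 2)) = 0 := by
      ext e'
      exact Finsupp.single_eq_of_ne fun h => he ⟨e', h⟩
    simp [h, boundary_single, hloop e he, ZModModule.add_self]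

theorem exists_boundary_eq_of_reachable {ends : E → V × V} {H : SimpleGraph V'} {φ : V' → V}
    {A : Set E}
    (hadj : ∀ a b, H.Adj a b → ∃ e ∈ A, ends e = (φ a, φ b) ∨ ends e = (φ b, φ a))
    {a b : V'} (hab : H.Reachable a b) :
    ∃ c : E →₀ ZMod 2,
      boundary ends c = Finsupp.single (φ a) 1 + Finsupp.single (φ b) 1 ∧ ∀ e ∉ A, c e = 0 := by
  obtain ⟨walk⟩ := hab
  induction walk with
  | nil => exact ⟨0, by rw [map_zero, ZModModule.add_self], fun _ _ => rfl⟩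
  | @cons a b d h _ ih =>
    obtain ⟨c, hc, hcA⟩ := ih
    obtain ⟨e, heA, he⟩ := hadj a b h
    have hboundary : boundary ends (Finsupp.single e 1) =
        Finsupp.single (φ a) 1 + Finsupp.single (φ b) 1 := by
      rcases he with he | he <;> rw [boundary_single, he]
      exact add_comm _ _
    refine ⟨Finsupp.single e 1 + c, ?_, fun e' he' => ?_⟩
    · rw [map_add, hboundary, hc, add_assoc, ← add_assoc (Finsupp.single (φ b) 1),
        ZModModule.add_self, zero_add]
    · have hne : e' ≠ e := by rintro rfl; exact he' heA
      rw [Finsupp.add_apply, Finsupp.single_eq_of_ne hne, hcA e' he', add_zero]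

theorem exists_cycle_of_mapDomain_boundary_eq_zero [Nonempty V] {ends : E → V × V}
    {π : V → V'} (l : E' → E)
    (hconn : ∀ p q, π p = π q → ∃ c : E →₀ ZMod 2,
      boundary ends c = Finsupp.single p 1 + Finsupp.single q 1 ∧ ∀ e, c (l e) = 0)
    {c : E →₀ ZMod 2} (hc : (boundary ends c).mapDomain π = 0) :
    ∃ c' : E →₀ ZMod 2, boundary ends c' = 0 ∧ ∀ e, c' (l e) = c (l e) := by
  let σ : V → V := Function.invFun π ∘ π
  have hσ (p : V) : π p = π (σ p) := (Function.invFun_eq ⟨p, rfl⟩).symm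
  choose T hT hTl using fun p => hconn p (σ p) (hσ p)
  have hboundary (b : V →₀ ZMod 2) :
      boundary ends (Finsupp.linearCombination (ZMod 2) T b) = b + b.mapDomain σ := by
    suffices h : boundary ends ∘ₗ Finsupp.linearCombination (ZMod 2) T =
        LinearMap.id + Finsupp.lmapDomain (ZMod 2) (ZMod 2) σ from LinearMap.congr_fun h b
    refine Finsupp.lhom_ext' fun p => LinearMap.ext_ring ?_
    simp [hT, Finsupp.mapDomain_single]
  refine ⟨c + Finsupp.linearCombination (ZMod 2) T (boundary ends c), ?_, fun e => ?_⟩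
  · rw [map_add, hboundary, Finsupp.mapDomain_comp, hc, Finsupp.mapDomain_zero, add_zero,
      ZModModule.add_self]
  · simp [Finsupp.linearCombination_apply, Finsupp.sum, hTl]

/-- Whitney's abstract duality: the multigraph on `F` whose edge `e` joins the two members of
`sides e` has as its mod-2 cuts exactly the mod-2 cycles of the multigraph given by `ends`. -/
def IsAbstractDual (ends : E → V × V) (sides : E → F × F) : Prop :=
  ∀ C : E →₀ ZMod 2,
    boundary ends C = 0 ↔ ∃ u : F → ZMod 2, ∀ e, C e = u (sides e).1 + u (sides e).2

namespace IsAbstractDual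

theorem of_map {ends : E → V × V} {sides : E → F × F} {ι : V → V'} (hι : Function.Injective ι)
    (h : IsAbstractDual (Prod.map ι ι ∘ ends) sides) : IsAbstractDual ends sides := fun C => by
  rw [← h C, ← mapDomain_boundary, ← Finsupp.mapDomain_zero (f := ι),
    (Finsupp.mapDomain_injective hι).eq_iff]

-- Deleting edges contracts them in the dual.
theorem delete {ends : E → V × V} {sides : E → F × F} (h : IsAbstractDual ends sides)
    {l : E' → E} (hl : Function.Injective l) :
    let face : F → Quot fun s t => ∃ e ∉ Set.range l, sides e = (s, t) := Quot.mk _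
    IsAbstractDual (ends ∘ l) (Prod.map face face ∘ sides ∘ l) := fun C => by
  have happly (e : E') : C.mapDomain l (l e) = C e := Finsupp.mapDomain_apply hl C e
  have hzero {e : E} (he : e ∉ Set.range l) : C.mapDomain l e = 0 :=
    Finsupp.mapDomain_of_notMem_range C e he
  rw [← boundary_mapDomain, h]
  constructor
  · rintro ⟨u, hu⟩
    refine ⟨Quot.lift u ?_, fun e => by rw [← happly, hu]; rfl⟩
    rintro s t ⟨e, he, hst⟩
    rw [← CharTwo.add_eq_zero, ← hzero he, hu, hst]
  · rintro ⟨u, hu⟩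
    refine ⟨fun s => u (Quot.mk _ s), fun e => ?_⟩
    by_cases he : e ∈ Set.range l
    · obtain ⟨e, rfl⟩ := he
      rw [happly, hu]; rfl
    · rw [hzero he, eq_comm, CharTwo.add_eq_zero]
      exact congrArg u (Quot.sound ⟨e, he, rfl⟩)

theorem contract [Finite E] [Nonempty V] {ends : E → V × V} {sides : E → F × F}
    (h : IsAbstractDual ends sides) {l : E' → E} (hl : Function.Injective l) {π : V → V'}
    (hloop : ∀ e ∉ Set.range l, π (ends e).1 = π (ends e).2)
    (hconn : ∀ p q, π p = π q → ∃ c : E →₀ ZMod 2,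
      boundary ends c = Finsupp.single p 1 + Finsupp.single q 1 ∧ ∀ e, c (l e) = 0) :
    IsAbstractDual (Prod.map π π ∘ ends ∘ l) (sides ∘ l) := fun C => by
  constructor
  · intro hC
    have hmap : (boundary ends (C.mapDomain l)).mapDomain π = 0 := by
      rw [boundary_mapDomain, mapDomain_boundary, hC]
    obtain ⟨c, hc, hcl⟩ := exists_cycle_of_mapDomain_boundary_eq_zero l hconn hmap
    obtain ⟨u, hu⟩ := (h c).1 hc
    exact ⟨u, fun e => by rw [← Finsupp.mapDomain_apply hl C e, ← hcl, hu, Function.comp_apply]⟩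
  · rintro ⟨u, hu⟩
    let c : E →₀ ZMod 2 :=
      Finsupp.equivFunOnFinite.symm fun e => u (sides e).1 + u (sides e).2
    have hc : boundary ends c = 0 := (h c).2 ⟨u, fun _ => rfl⟩
    have hcC : c.comapDomain l hl.injOn = C := Finsupp.ext fun e => (hu e).symm
    calc boundary (Prod.map π π ∘ ends ∘ l) C
        = boundary (Prod.map π π ∘ ends) c := by
          rw [boundary_eq_boundary_comapDomain (Prod.map π π ∘ ends) hl hloop, hcC]; rfl
      _ = 0 := by rw [← mapDomain_boundary, hc, Finsupp.mapDomain_zero]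

end IsAbstractDual

end Chains

section Counting

variable {V E F : Type*}

theorem card_le_finrank_ker_boundary_add_card [Fintype V] [Fintype E] (ends : E → V × V) :
    Fintype.card E ≤ Module.finrank (ZMod 2) (LinearMap.ker (boundary ends)) + Fintype.card V := by
  have hrank := (boundary ends).finrank_range_add_finrank_ker
  have hrange := Submodule.finrank_le (LinearMap.range (boundary ends))
  rw [Module.finrank_finsupp_self] at hrank hrange
  lia

namespace IsAbstractDual

-- MacLane's 2-basis; its members are the boundaries of single faces.
theorem exists_two_basis [Finite E] {ends : E → V × V} {sides : E → F × F}
    (h : IsAbstractDual ends sides) :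
    ∃ 𝓑 : Finset (E →₀ ZMod 2), (∀ C ∈ 𝓑, boundary ends C = 0 ∧ C ≠ 0) ∧
      (∀ e, (𝓑.filter fun C => C e ≠ 0).card ≤ 2) ∧
      LinearMap.ker (boundary ends) ≤ Submodule.span (ZMod 2) 𝓑 := by
  classical
  have := Fintype.ofFinite E
  let faceCycle (f : F) : E →₀ ZMod 2 := Finsupp.equivFunOnFinite.symm fun e =>
    (Pi.single f 1 : F → ZMod 2) (sides e).1 + (Pi.single f 1 : F → ZMod 2) (sides e).2
  let faces : Finset F := Finset.univ.image (fun e => (sides e).1) ∪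
    Finset.univ.image fun e => (sides e).2
  refine ⟨(faces.image faceCycle).erase 0, fun C hC => ?_, fun e => ?_, fun C hC => ?_⟩
  · obtain ⟨hC0, hC⟩ := Finset.mem_erase.1 hC
    obtain ⟨f, -, rfl⟩ := Finset.mem_image.1 hC
    exact ⟨(h _).2 ⟨Pi.single f 1, fun _ => rfl⟩, hC0⟩
  · have hsub : (((faces.image faceCycle).erase 0).filter fun C => C e ≠ 0) ⊆
        {faceCycle (sides e).1, faceCycle (sides e).2} := by
      intro C hC
      obtain ⟨hC, hCe⟩ := Finset.mem_filter.1 hC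
      obtain ⟨f, -, rfl⟩ := Finset.mem_image.1 (Finset.mem_erase.1 hC).2
      have hf : (sides e).1 = f ∨ (sides e).2 = f := by
        by_contra! hne
        simp [faceCycle, Pi.single_eq_of_ne hne.1, Pi.single_eq_of_ne hne.2] at hCe
      rcases hf with rfl | rfl <;> simp
    exact (Finset.card_le_card hsub).trans Finset.card_le_two
  · obtain ⟨u, hu⟩ := (h C).1 hC
    have hsum : C = ∑ f ∈ faces, u f • faceCycle f := by
      ext e
      have h₁ : (sides e).1 ∈ faces := by simp [faces]
      have h₂ : (sides e).2 ∈ faces := by simp [faces]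
      simp [Finsupp.finsetSum_apply, faceCycle, hu, mul_add, Finset.sum_add_distrib,
        Pi.single_apply, h₁, h₂]
    rw [Finset.coe_erase, Submodule.span_sdiff_singleton_zero, hsum]
    exact Submodule.sum_mem _ fun f hf => Submodule.smul_mem _ _
      (Submodule.subset_span (Finset.mem_coe.2 (Finset.mem_image_of_mem _ hf)))

theorem mul_card_le [Fintype V] [Fintype E] {ends : E → V × V} {sides : E → F × F}
    (h : IsAbstractDual ends sides) {k : ℕ}
    (hk : ∀ C, boundary ends C = 0 → C ≠ 0 → k ≤ C.support.card) :
    k * Fintype.card E ≤ 2 * Fintype.card E + k * Fintype.card V := by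
  classical
  obtain ⟨𝓑, hcycle, htwo, hspan⟩ := h.exists_two_basis
  have hker : Module.finrank (ZMod 2) (LinearMap.ker (boundary ends)) ≤ 𝓑.card :=
    (Submodule.finrank_mono hspan).trans (finrank_span_finset_le_card 𝓑)
  have hincidences : k * 𝓑.card ≤ 2 * Fintype.card E :=
    calc k * 𝓑.card ≤ ∑ C ∈ 𝓑, C.support.card := by
          rw [mul_comm, ← smul_eq_mul]
          exact Finset.card_nsmul_le_sum _ _ _ fun C hC => hk C (hcycle C hC).1 (hcycle C hC).2
      _ = ∑ C ∈ 𝓑, (Finset.univ.filter fun e => C e ≠ 0).card := by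
          refine Finset.sum_congr rfl fun C _ => congrArg _ ?_
          ext e
          simp
      _ = ∑ e, (𝓑.filter fun C => C e ≠ 0).card :=
          Finset.sum_card_bipartiteAbove_eq_sum_card_bipartiteBelow _
      _ ≤ 2 * Fintype.card E := by
          rw [mul_comm, ← smul_eq_mul]
          exact Finset.sum_le_card_nsmul _ _ _ fun e _ => htwo e
  calc k * Fintype.card E ≤ k * (𝓑.card + Fintype.card V) := Nat.mul_le_mul_left k <|
        (card_le_finrank_ker_boundary_add_card ends).trans (Nat.add_le_add_right hker _)
    _ ≤ 2 * Fintype.card E + k * Fintype.card V := by rw [mul_add]; gcongr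

end IsAbstractDual

end Counting

section TriangleFree

variable {V : Type*} {G : SimpleGraph V} {ends : G.edgeSet → V × V}

theorem exists_ne_mem_of_boundary_eq_zero
    (hends : ∀ e : G.edgeSet, s((ends e).1, (ends e).2) = (e : Sym2 V)) {C : G.edgeSet →₀ ZMod 2}
    (hC : boundary ends C = 0) {e : G.edgeSet} (he : C e ≠ 0) {v : V} (hv : v ∈ (e : Sym2 V)) :
    ∃ e' ≠ e, C e' ≠ 0 ∧ v ∈ (e' : Sym2 V) := by
  classical
  by_contra! hnone
  let touch (e' : G.edgeSet) : ZMod 2 :=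
    Finsupp.single (ends e').1 1 v + Finsupp.single (ends e').2 1 v
  have hother (e' : G.edgeSet) (he' : e' ∈ C.support) (hne : e' ≠ e) : C e' • touch e' = 0 := by
    have hv' := hnone e' hne (Finsupp.mem_support_iff.1 he')
    rw [← hends, Sym2.mem_iff, not_or] at hv'
    simp [touch, Finsupp.single_eq_of_ne hv'.1, Finsupp.single_eq_of_ne hv'.2]
  have htouch : touch e = 1 := by
    have hne : (ends e).1 ≠ (ends e).2 := G.ne_of_adj (by rw [← mem_edgeSet, hends]; exact e.2)
    rw [← hends, Sym2.mem_iff] at hv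
    rcases hv with rfl | rfl
    · simp [touch, Finsupp.single_eq_of_ne hne]
    · simp [touch, Finsupp.single_eq_of_ne hne.symm]
  have hsum : boundary ends C v = ∑ e' ∈ C.support, C e' • touch e' := by
    simp [boundary, Finsupp.linearCombination_apply, Finsupp.sum, Finsupp.finsetSum_apply,
      touch, mul_add, -Finsupp.smul_single]
  rw [hC, Finset.sum_eq_single_of_mem e (Finsupp.mem_support_iff.2 he) hother, htouch] at hsum
  exact he (by simpa using hsum.symm)

theorem four_le_card_support_of_boundary_eq_zero (hG : G.CliqueFree 3)
    (hends : ∀ e : G.edgeSet, s((ends e).1, (ends e).2) = (e : Sym2 V)) {C : G.edgeSet →₀ ZMod 2}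
    (hC : boundary ends C = 0) (hC0 : C ≠ 0) : 4 ≤ C.support.card := by
  classical
  have hnext := fun e he v => exists_ne_mem_of_boundary_eq_zero hends hC (e := e) he (v := v)
  obtain ⟨⟨e, huv⟩, hCe⟩ := Finsupp.support_nonempty_iff.2 hC0
  rw [Finsupp.mem_support_iff] at hCe
  induction e with | _ u v
  obtain ⟨⟨e₂, hvw⟩, hne₂, hCe₂, hv⟩ := hnext _ hCe v (by simp)
  obtain ⟨w, rfl⟩ := hv
  obtain ⟨⟨e₃, hux⟩, hne₃, hCe₃, hu⟩ := hnext _ hCe u (by simp)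
  obtain ⟨x, rfl⟩ := hu
  obtain ⟨⟨e₄, he₄⟩, hne₄, hCe₄, hw⟩ := hnext _ hCe₂ w (by simp)
  simp only [mem_edgeSet, ne_eq, Subtype.mk.injEq] at huv hvw hux hne₂ hne₃ hne₄ hw
  have hwu : w ≠ u := by rintro rfl; exact hne₂ Sym2.eq_swap
  have hxv : x ≠ v := by rintro rfl; exact hne₃ rfl
  have hwx : w ≠ x := by
    rintro rfl
    exact hG {u, v, w} (is3Clique_triple_iff.2 ⟨huv, hux, hvw⟩)
  have h₂₃ : s(v, w) ≠ s(u, x) := by simp [huv.ne', Ne.symm hxv]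
  have h₁₄ : s(u, v) ≠ e₄ := by rintro rfl; simp [hwu, hvw.ne'] at hw
  have h₃₄ : s(u, x) ≠ e₄ := by rintro rfl; simp [hwu, hwx] at hw
  have hsub : {s(u, v), s(v, w), s(u, x), e₄} ⊆ C.support.map (Function.Embedding.subtype _) := by
    simp [Finset.insert_subset_iff, *]
  have hcard : ({s(u, v), s(v, w), s(u, x), e₄} : Finset (Sym2 V)).card = 4 := by
    rw [Finset.card_insert_of_notMem, Finset.card_insert_of_notMem, Finset.card_pair h₃₄]
    · simp only [Finset.mem_insert, Finset.mem_singleton, not_or]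
      exact ⟨h₂₃, Ne.symm hne₄⟩
    · simp only [Finset.mem_insert, Finset.mem_singleton, not_or]
      exact ⟨Ne.symm hne₂, Ne.symm hne₃, h₁₄⟩
  rw [← hcard, ← Finset.card_map (Function.Embedding.subtype _)]
  exact Finset.card_le_card hsub

end TriangleFree

/-! ### Minors of the square lattice -/

section Lattice

/-- Edges of the square lattice `ℤ × ℤ`: `(p, true)` is the horizontal unit edge with left end `p`,
`(p, false)` the vertical unit edge with lower end `p`. -/
abbrev LatticeEdge : Type := (ℤ × ℤ) × Bool

/-- The two ends of a lattice edge. -/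
def latticeEnds : LatticeEdge → (ℤ × ℤ) × (ℤ × ℤ)
  | (p, true) => (p, (p.1 + 1, p.2))
  | (p, false) => (p, (p.1, p.2 + 1))

/-- The two unit squares on either side of a lattice edge, a square being named by its lower left
corner. -/
def latticeSides : LatticeEdge → (ℤ × ℤ) × (ℤ × ℤ)
  | (p, true) => (p, (p.1, p.2 - 1))
  | (p, false) => (p, (p.1 - 1, p.2))

theorem boundary_latticeEnds_apply (c : LatticeEdge →₀ ZMod 2) (x y : ℤ) :
    boundary latticeEnds c (x, y) =
      c ((x, y), true) + c ((x, y), false) + c ((x - 1, y), true) + c ((x, y - 1), false) := by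
  suffices h : Finsupp.lapply (x, y) ∘ₗ boundary latticeEnds =
      (Finsupp.lapply ((x, y), true) + Finsupp.lapply ((x, y), false) +
        Finsupp.lapply ((x - 1, y), true) + Finsupp.lapply ((x, y - 1), false) :
        (LatticeEdge →₀ ZMod 2) →ₗ[ZMod 2] ZMod 2) from LinearMap.congr_fun h c
  refine Finsupp.lhom_ext' fun ⟨⟨a, b⟩, d⟩ => LinearMap.ext_ring ?_
  cases d <;>
    simp [boundary_single, latticeEnds, Finsupp.single_apply, eq_sub_iff_add_eq]

/-- The number of horizontal edges of `c` at height between `j` and `y` under the square `(x, y)`,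
modulo 2: for a cycle supported above height `j` this is its winding parity around the square. -/
noncomputable def windingParity (c : LatticeEdge →₀ ZMod 2) (j : ℤ) (s : ℤ × ℤ) : ZMod 2 :=
  ∑ k ∈ Finset.Icc j s.2, c ((s.1, k), true)

variable {c : LatticeEdge →₀ ZMod 2} {j : ℤ}

theorem windingParity_of_lt {s : ℤ × ℤ} (h : s.2 < j) : windingParity c j s = 0 := by
  simp [windingParity, Finset.Icc_eq_empty_of_lt h]

theorem windingParity_eq_add {x y : ℤ} (h : j ≤ y) :
    windingParity c j (x, y) = c ((x, y), true) + windingParity c j (x, y - 1) := by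
  simp only [windingParity]
  rw [← Finset.insert_Icc_sub_one_right_eq_Icc h, Finset.sum_insert (by simp)]

theorem eq_windingParity_add_windingParity (hc : boundary latticeEnds c = 0)
    (hj : ∀ l : LatticeEdge, l.1.2 < j → c l = 0) (l : LatticeEdge) :
    c l = windingParity c j (latticeSides l).1 + windingParity c j (latticeSides l).2 := by
  have hcycle (x y : ℤ) : c ((x, y), true) + c ((x, y), false) + c ((x - 1, y), true) +
      c ((x, y - 1), false) = 0 := by
    rw [← boundary_latticeEnds_apply, hc, Finsupp.zero_apply]
  have hlow (x y : ℤ) (d : Bool) (hy : y < j) : c ((x, y), d) = 0 := hj ((x, y), d) hy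
  have hvertical (x y : ℤ) (hy : j - 1 ≤ y) :
      c ((x, y), false) = windingParity c j (x, y) + windingParity c j (x - 1, y) := by
    induction y, hy using Int.leInduction with
    | base => simp [hlow, windingParity_of_lt]
    | succ y hy ih =>
      have h := hcycle x (y + 1)
      have hy' : j ≤ y + 1 := by lia
      rw [windingParity_eq_add hy', windingParity_eq_add hy']
      rw [add_sub_cancel_right] at h ⊢
      grind [CharTwo.add_self_eq_zero]
  obtain ⟨⟨x, y⟩, _ | _⟩ := l
  · rcases lt_or_ge y j with hy | hy
    · simp [latticeSides, hlow, windingParity_of_lt, hy]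
    · exact hvertical x y (by lia)
  · rcases lt_or_ge y j with hy | hy
    · have hy' : y - 1 < j := by lia
      simp [latticeSides, hlow, windingParity_of_lt, hy, hy']
    · simp [latticeSides, windingParity_eq_add hy, add_assoc, CharTwo.add_self_eq_zero]

theorem isAbstractDual_lattice : IsAbstractDual latticeEnds latticeSides := fun c => by
  constructor
  · intro hc
    obtain ⟨j, hj⟩ := ((c.support.image fun l => l.1.2).finite_toSet).bddBelow
    refine ⟨windingParity c j, eq_windingParity_add_windingParity hc fun l hl => ?_⟩
    by_contra hcl
    exact hl.not_ge (hj (Finset.mem_image_of_mem _ (Finsupp.mem_support_iff.2 hcl)))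
  · rintro ⟨u, hu⟩
    ext ⟨x, y⟩
    rw [boundary_latticeEnds_apply]
    simp only [hu, latticeSides, Finsupp.zero_apply]
    grind [CharTwo.add_self_eq_zero]

end Lattice

section Minor

universe u

variable {V X E E' : Type*} {F : Type u}

theorem exists_quotient_map_of_pairwise_disjoint {α : Type*} {B : V → Set α}
    (hB : Pairwise (Function.onFun Disjoint B)) :
    ∃ π : α → V ⊕ α, (∀ v, ∀ p ∈ B v, π p = Sum.inl v) ∧
      ∀ p q, π p = π q → p = q ∨ ∃ v, p ∈ B v ∧ q ∈ B v := by
  classical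
  have hex (p : α) : ∃ x : V ⊕ α, (∀ v, p ∈ B v → x = Sum.inl v) ∧
      (∀ v, x = Sum.inl v → p ∈ B v) ∧ ∀ q, x = Sum.inr q → p = q := by
    by_cases hp : ∃ v, p ∈ B v
    · obtain ⟨v, hv⟩ := hp
      have huniq (w : V) (hw : p ∈ B w) : v = w := by
        by_contra hne
        exact Set.disjoint_left.1 (hB hne) hv hw
      refine ⟨Sum.inl v, fun w hw => congrArg _ (huniq w hw), ?_, by simp⟩
      rintro _ ⟨⟩
      exact hv
    · refine ⟨Sum.inr p, fun v hv => (hp ⟨v, hv⟩).elim, by simp, by simp⟩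
  choose π hπ hinl hinr using hex
  refine ⟨π, fun v p => hπ p v, fun p q hpq => ?_⟩
  rcases hp : π p with v | r
  · exact Or.inr ⟨v, hinl p v hp, hinl q v (hpq ▸ hp)⟩
  · exact Or.inl ((hinr p r hp).trans (hinr q r (hpq ▸ hp)).symm)

theorem IsAbstractDual.exists_of_minor [Finite E'] [Nonempty X] {ends : E → X × X}
    {sides : E → F × F} (h : IsAbstractDual ends sides) {B : V → Set X}
    (hB : Pairwise (Function.onFun Disjoint B)) {A : Set E} (hA : A.Finite)
    (hAB : ∀ a ∈ A, ∃ v, (ends a).1 ∈ B v ∧ (ends a).2 ∈ B v)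
    (hconn : ∀ v, ∀ p ∈ B v, ∀ q ∈ B v, ∃ c : E →₀ ZMod 2,
      boundary ends c = Finsupp.single p 1 + Finsupp.single q 1 ∧ ∀ e ∉ A, c e = 0)
    {ends' : E' → V × V} (hloop : ∀ e, (ends' e).1 ≠ (ends' e).2) {l : E' → E}
    (hl : Function.Injective l)
    (hlB : ∀ e, (ends (l e)).1 ∈ B (ends' e).1 ∧ (ends (l e)).2 ∈ B (ends' e).2) :
    ∃ (F' : Type u) (sides' : E' → F' × F'), IsAbstractDual ends' sides' := by
  obtain ⟨π, hπ, hπeq⟩ := exists_quotient_map_of_pairwise_disjoint hB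
  have hlA (e : E') : l e ∉ A := fun he => by
    obtain ⟨v, h₁, h₂⟩ := hAB _ he
    exact hloop e (Sum.inl_injective (β := X) (by
      rw [← hπ _ _ (hlB e).1, ← hπ _ _ (hlB e).2, hπ v _ h₁, hπ v _ h₂]))
  let S : Set E := A ∪ Set.range l
  have : Finite S := (hA.union (Set.finite_range l)).to_subtype
  let lS (e : E') : S := ⟨l e, Or.inr ⟨e, rfl⟩⟩
  have hends : Prod.map Sum.inl Sum.inl ∘ ends' = Prod.map π π ∘ (ends ∘ Subtype.val) ∘ lS :=
    funext fun e => (Prod.ext (hπ _ _ (hlB e).1) (hπ _ _ (hlB e).2)).symm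
  have hdual := (h.delete (l := ((↑) : S → E)) Subtype.val_injective).contract (l := lS) (π := π)
    (fun e e' hee' => hl (congrArg Subtype.val hee')) ?_ ?_
  · exact ⟨_, _, IsAbstractDual.of_map Sum.inl_injective (hends ▸ hdual)⟩
  · rintro ⟨a, ha | ⟨e, rfl⟩⟩ haS
    · obtain ⟨v, h₁, h₂⟩ := hAB a ha
      exact (hπ v _ h₁).trans (hπ v _ h₂).symm
    · exact (haS ⟨e, rfl⟩).elim
  · intro p q hpq
    obtain rfl | ⟨v, hp, hq⟩ := hπeq p q hpq
    · exact ⟨0, by rw [map_zero, ZModModule.add_self], fun _ => rfl⟩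
    · obtain ⟨c, hc, hcA⟩ := hconn v p hp q hq
      have hsupp : (c.support : Set E) ⊆ Set.range ((↑) : S → E) := fun e he =>
        ⟨⟨e, Or.inl (by_contra fun heA => Finsupp.mem_support_iff.1 he (hcA e heA))⟩, rfl⟩
      refine ⟨c.comapDomain _ Subtype.val_injective.injOn, ?_, fun e => hcA _ (hlA e)⟩
      rw [← boundary_mapDomain, Finsupp.mapDomain_comapDomain _ Subtype.val_injective _ hsupp, hc]

end Minor

section GridMinor

/-- The square grid graph on `ℤ × ℤ`. -/
def gridGraph : SimpleGraph (ℤ × ℤ) := SimpleGraph.fromRel fun p q => ∃ l, latticeEnds l = (p, q)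

theorem gridGraph_adj_iff {p q : ℤ × ℤ} :
    gridGraph.Adj p q ↔ ∃ l, latticeEnds l = (p, q) ∨ latticeEnds l = (q, p) := by
  have hne : ∀ l, (latticeEnds l).1 ≠ (latticeEnds l).2 := by
    rintro ⟨p, _ | _⟩ <;> simp [latticeEnds, Prod.ext_iff]
  rw [gridGraph, fromRel_adj, exists_or, and_iff_right_iff_imp]
  rintro (⟨l, hl⟩ | ⟨l, hl⟩) rfl <;> exact hne l (by rw [hl])

variable {V : Type*}

/-- `G` is a minor of the square grid: its vertices are modelled by pairwise disjoint finite
connected branch sets, with a grid edge between any two that are adjacent in `G`. -/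
def IsGridMinor (G : SimpleGraph V) : Prop :=
  ∃ B : V → Set (ℤ × ℤ), (∀ v, (B v).Finite) ∧ Pairwise (Function.onFun Disjoint B) ∧
    (∀ v, (gridGraph.induce (B v)).Connected) ∧
    ∀ u v, G.Adj u v → ∃ p ∈ B u, ∃ q ∈ B v, gridGraph.Adj p q

theorem exists_latticeEdge_of_adj {G : SimpleGraph V} {B : V → Set (ℤ × ℤ)}
    (hadj : ∀ u v, G.Adj u v → ∃ p ∈ B u, ∃ q ∈ B v, gridGraph.Adj p q) (e : G.edgeSet) :
    ∃ (l : LatticeEdge) (uv : V × V), s(uv.1, uv.2) = (e : Sym2 V) ∧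
      (latticeEnds l).1 ∈ B uv.1 ∧ (latticeEnds l).2 ∈ B uv.2 := by
  obtain ⟨e, he⟩ := e
  induction e with | _ u v
  obtain ⟨p, hp, q, hq, hpq⟩ := hadj u v he
  obtain ⟨l, hl | hl⟩ := gridGraph_adj_iff.1 hpq
  · exact ⟨l, (u, v), rfl, by rwa [hl], by rwa [hl]⟩
  · exact ⟨l, (v, u), Sym2.eq_swap, by rwa [hl], by rwa [hl]⟩

theorem finite_setOf_latticeEnds_fst_mem {A : Set (ℤ × ℤ)} (hA : A.Finite) :
    {l | (latticeEnds l).1 ∈ A}.Finite := by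
  refine (hA.prod Set.finite_univ).subset ?_
  rintro ⟨p, _ | _⟩ hl <;> exact ⟨hl, Set.mem_univ _⟩

theorem IsGridMinor.exists_isAbstractDual [Finite V] {G : SimpleGraph V} (h : IsGridMinor G) :
    ∃ (ends : G.edgeSet → V × V) (F : Type) (sides : G.edgeSet → F × F),
      (∀ e : G.edgeSet, s((ends e).1, (ends e).2) = (e : Sym2 V)) ∧ IsAbstractDual ends sides := by
  obtain ⟨B, hfin, hdisj, hconn, hadj⟩ := h
  choose l ends hends hlB using exists_latticeEdge_of_adj hadj
  have hl : Function.Injective l := fun e e' hee' => by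
    have huniq {u v : V} {p : ℤ × ℤ} (hu : p ∈ B u) (hv : p ∈ B v) : u = v := by
      by_contra hne
      exact Set.disjoint_left.1 (hdisj hne) hu hv
    refine Subtype.ext ?_
    rw [← hends, ← hends, huniq (hlB e).1 (hee' ▸ (hlB e').1),
      huniq (hlB e).2 (hee' ▸ (hlB e').2)]
  let inner (v : V) : Set LatticeEdge := {a | (latticeEnds a).1 ∈ B v ∧ (latticeEnds a).2 ∈ B v}
  have hinner : (⋃ v, inner v).Finite := Set.finite_iUnion fun v =>
    (finite_setOf_latticeEnds_fst_mem (hfin v)).subset fun _ ha => ha.1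
  have hloop (e : G.edgeSet) : (ends e).1 ≠ (ends e).2 :=
    G.ne_of_adj (by rw [← mem_edgeSet, hends]; exact e.2)
  have hchain (v : V) (p) (hp : p ∈ B v) (q) (hq : q ∈ B v) : ∃ c : LatticeEdge →₀ ZMod 2,
      boundary latticeEnds c = Finsupp.single p 1 + Finsupp.single q 1 ∧
        ∀ a ∉ ⋃ v, inner v, c a = 0 := by
    refine exists_boundary_eq_of_reachable (φ := ((↑) : B v → ℤ × ℤ)) ?_
      ((hconn v).preconnected ⟨p, hp⟩ ⟨q, hq⟩)
    rintro ⟨a, ha⟩ ⟨b, hb⟩ hab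
    obtain ⟨m, hm⟩ := gridGraph_adj_iff.1 hab
    exact ⟨m, Set.mem_iUnion.2 ⟨v, by rcases hm with hm | hm <;> simp [inner, hm, ha, hb]⟩, hm⟩
  obtain ⟨F, sides, hdual⟩ := isAbstractDual_lattice.exists_of_minor hdisj hinner
    (fun _ ha => Set.mem_iUnion.1 ha) hchain hloop hl hlB
  exact ⟨ends, F, sides, hends, hdual⟩

end GridMinor

/-! ### Plane drawings as grid minors -/

section Discretization

open Filter
open scoped Pointwise

/-- The lattice points in the open unit box (for the supremum metric) around `R • x`. -/
def gridBox (R : ℝ) (x : ℝ × ℝ) : Set (ℤ × ℤ) := {p | dist ((p.1 : ℝ), (p.2 : ℝ)) (R • x) < 1}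

/-- The lattice points at distance less than one from `R • K`: a discrete copy of `K` at
resolution `1 / R`. -/
def gridNhd (R : ℝ) (K : Set (ℝ × ℝ)) : Set (ℤ × ℤ) := ⋃ x ∈ K, gridBox R x

variable {R : ℝ} {x : ℝ × ℝ} {K L : Set (ℝ × ℝ)}

theorem mem_gridBox_iff {p : ℤ × ℤ} :
    p ∈ gridBox R x ↔ |p.1 - R * x.1| < 1 ∧ |p.2 - R * x.2| < 1 := by
  simp [gridBox, Prod.dist_eq, Real.dist_eq]

theorem round_mem_gridBox (R : ℝ) (x : ℝ × ℝ) : (round (R * x.1), round (R * x.2)) ∈ gridBox R x :=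
  mem_gridBox_iff.2 ⟨by rw [abs_sub_comm]; linarith [abs_sub_round (R * x.1)],
    by rw [abs_sub_comm]; linarith [abs_sub_round (R * x.2)]⟩

theorem eventually_round_mem_gridBox (R : ℝ) (x : ℝ × ℝ) :
    ∀ᶠ y in nhds x, (round (R * x.1), round (R * x.2)) ∈ gridBox R y := by
  have hcont : Continuous fun y : ℝ × ℝ =>
      dist ((round (R * x.1) : ℝ), (round (R * x.2) : ℝ)) (R • y) := by fun_prop
  exact hcont.continuousAt.eventually_lt continuousAt_const (round_mem_gridBox R x)

theorem gridBox_subset_gridNhd (hx : x ∈ K) : gridBox R x ⊆ gridNhd R K :=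
  Set.subset_biUnion_of_mem (u := fun y => gridBox R y) hx

theorem finite_gridNhd (hK : Bornology.IsBounded K) : (gridNhd R K).Finite := by
  have hcast : Tendsto (Prod.map ((↑) : ℤ → ℝ) ((↑) : ℤ → ℝ)) cofinite
      (Bornology.cobounded (ℝ × ℝ)) := by
    rw [Metric.cobounded_eq_cocompact, ← coprod_cocompact, ← coprod_cofinite]
    exact Int.tendsto_coe_cofinite.prodMap_coprod Int.tendsto_coe_cofinite
  have hfin := hcast (Bornology.isBounded_def.1 ((hK.smul₀ R).thickening (δ := 1)))
  rw [mem_map, mem_cofinite, ← Set.preimage_compl, compl_compl] at hfin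
  refine hfin.subset fun p hp => ?_
  obtain ⟨x, hx, hpx⟩ := Set.mem_iUnion₂.1 hp
  exact Metric.mem_thickening_iff.2 ⟨R • x, Set.smul_mem_smul_set hx, hpx⟩

theorem gridGraph_reachable_of_abs_sub_fst_le_one {s : Set (ℤ × ℤ)} {x x' y : ℤ}
    (hp : (x, y) ∈ s) (hq : (x', y) ∈ s) (h : |x - x'| ≤ 1) :
    (gridGraph.induce s).Reachable ⟨_, hp⟩ ⟨_, hq⟩ := by
  have hstep (a : ℤ) : gridGraph.Adj (a, y) (a + 1, y) :=
    gridGraph_adj_iff.2 ⟨((a, y), true), Or.inl rfl⟩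
  obtain rfl | rfl | rfl : x' = x ∨ x' = x + 1 ∨ x = x' + 1 := by grind
  · rfl
  · exact Adj.reachable (induce_adj.2 (hstep x))
  · exact Adj.reachable (induce_adj.2 (hstep x').symm)

theorem gridGraph_reachable_of_abs_sub_snd_le_one {s : Set (ℤ × ℤ)} {x y y' : ℤ}
    (hp : (x, y) ∈ s) (hq : (x, y') ∈ s) (h : |y - y'| ≤ 1) :
    (gridGraph.induce s).Reachable ⟨_, hp⟩ ⟨_, hq⟩ := by
  have hstep (b : ℤ) : gridGraph.Adj (x, b) (x, b + 1) :=
    gridGraph_adj_iff.2 ⟨((x, b), false), Or.inl rfl⟩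
  obtain rfl | rfl | rfl : y' = y ∨ y' = y + 1 ∨ y = y' + 1 := by grind
  · rfl
  · exact Adj.reachable (induce_adj.2 (hstep y))
  · exact Adj.reachable (induce_adj.2 (hstep y').symm)

theorem preconnected_gridBox (R : ℝ) (x : ℝ × ℝ) :
    (gridGraph.induce (gridBox R x)).Preconnected := by
  have hclose {m n : ℤ} {t : ℝ} (hm : |m - t| < 1) (hn : |n - t| < 1) : |m - n| ≤ 1 := by
    have h : |(m : ℝ) - n| < 2 := by grind
    exact Int.lt_add_one_iff.1 (by exact_mod_cast h)
  rintro ⟨⟨a, b⟩, hp⟩ ⟨⟨a', b'⟩, hq⟩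
  obtain ⟨ha, hb⟩ := mem_gridBox_iff.1 hp
  obtain ⟨ha', hb'⟩ := mem_gridBox_iff.1 hq
  have hcorner : (a', b) ∈ gridBox R x := mem_gridBox_iff.2 ⟨ha', hb⟩
  exact (gridGraph_reachable_of_abs_sub_fst_le_one hp hcorner (hclose ha ha')).trans
    (gridGraph_reachable_of_abs_sub_snd_le_one hcorner hq (hclose hb hb'))

theorem preconnected_gridNhd (R : ℝ) (hK : IsPreconnected K) :
    (gridGraph.induce (gridNhd R K)).Preconnected := by
  have hbox {x : ℝ × ℝ} (hx : x ∈ K) {p q : gridNhd R K} (hp : p.1 ∈ gridBox R x)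
      (hq : q.1 ∈ gridBox R x) : (gridGraph.induce (gridNhd R K)).Reachable p q :=
    (preconnected_gridBox R x ⟨p, hp⟩ ⟨q, hq⟩).map
      (gridGraph.induceHomOfLE (gridBox_subset_gridNhd hx)).toHom
  let center (x : ℝ × ℝ) (hx : x ∈ K) : gridNhd R K :=
    ⟨_, gridBox_subset_gridNhd hx (round_mem_gridBox R x)⟩
  let Linked (x y : ℝ × ℝ) : Prop := ∀ p q : gridNhd R K, p.1 ∈ gridBox R x → q.1 ∈ gridBox R y →
    (gridGraph.induce (gridNhd R K)).Reachable p q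
  have hlinked {x y : ℝ × ℝ} (hx : x ∈ K) (hy : y ∈ K) : Linked x y := by
    refine hK.induction₂ Linked (fun x hx => ?_) (fun x y z _ hy _ hxy hyz p q hp hq => ?_)
      (fun x y _ _ hxy p q hp hq => (hxy q p hq hp).symm) hx hy
    · filter_upwards [self_mem_nhdsWithin,
        nhdsWithin_le_nhds (eventually_round_mem_gridBox R x)] with y hy hxy p q hp hq
      exact (hbox hx hp (q := center x hx) (round_mem_gridBox R x)).trans (hbox hy hxy hq)
    · exact (hxy p (center y hy) hp (round_mem_gridBox R y)).trans
        (hyz (center y hy) q (round_mem_gridBox R y) hq)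
  rintro p q
  obtain ⟨x, hx, hp⟩ := Set.mem_iUnion₂.1 p.2
  obtain ⟨y, hy, hq⟩ := Set.mem_iUnion₂.1 q.2
  exact hlinked hx hy p q hp hq

theorem disjoint_of_disjoint_gridNhd (h : Disjoint (gridNhd R K) (gridNhd R L)) : Disjoint K L :=
  Set.disjoint_left.2 fun x hK hL => Set.disjoint_left.1 h
    (gridBox_subset_gridNhd hK (round_mem_gridBox R x))
    (gridBox_subset_gridNhd hL (round_mem_gridBox R x))

theorem eventually_disjoint_gridNhd (hK : IsCompact K) (hL : IsClosed L) (h : Disjoint K L) :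
    ∀ᶠ R in atTop, Disjoint (gridNhd R K) (gridNhd R L) := by
  obtain ⟨δ, hδ, hdisj⟩ := h.exists_thickenings hK hL
  filter_upwards [eventually_gt_atTop 0, eventually_gt_atTop (2 / δ)] with R hR hRδ
  refine Set.disjoint_left.2 fun p hpK hpL => ?_
  obtain ⟨x, hx, hpx⟩ := Set.mem_iUnion₂.1 hpK
  obtain ⟨y, hy, hpy⟩ := Set.mem_iUnion₂.1 hpL
  have hdist : R * dist x y < 2 := by
    have := dist_triangle_left (R • x) (R • y) ((p.1 : ℝ), (p.2 : ℝ))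
    rw [dist_smul₀, Real.norm_of_nonneg hR.le] at this
    linarith [hpx.out, hpy.out]
  have hδx : dist x y < δ := by
    rw [div_lt_iff₀ hδ] at hRδ
    exact lt_of_mul_lt_mul_left (hdist.trans hRδ) hR.le
  exact Set.disjoint_left.1 hdisj (Metric.mem_thickening_iff.2 ⟨x, hx, by simpa using hδ⟩)
    (Metric.mem_thickening_iff.2 ⟨y, hy, hδx⟩)

theorem exists_grid_model {ι : Type*} [Finite ι] {K : ι → Set (ℝ × ℝ)}
    (hcompact : ∀ i, IsCompact (K i)) (hconn : ∀ i, IsPreconnected (K i)) :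
    ∃ D : ι → Set (ℤ × ℤ), (∀ i, (D i).Finite) ∧
      (∀ i, (gridGraph.induce (D i)).Preconnected) ∧
      ∀ i j, Disjoint (D i) (D j) ↔ Disjoint (K i) (K j) := by
  have hev : ∀ᶠ R in atTop, ∀ i j, Disjoint (K i) (K j) →
      Disjoint (gridNhd R (K i)) (gridNhd R (K j)) := by
    simp only [eventually_all]
    exact fun i j h => eventually_disjoint_gridNhd (hcompact i) (hcompact j).isClosed h
  obtain ⟨R, hR⟩ := hev.exists
  exact ⟨fun i => gridNhd R (K i), fun i => finite_gridNhd (hcompact i).isBounded,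
    fun i => preconnected_gridNhd R (hconn i),
    fun i j => ⟨disjoint_of_disjoint_gridNhd, hR i j⟩⟩

end Discretization

section IncidencePattern

variable {V α β : Type*} {G : SimpleGraph V}

/-- A family of sets, one for each vertex and each edge of `G`, that meet as in a thickened drawing
of `G`: edge sets meet no other edge set, and exactly the vertex sets of their own ends. -/
structure IsIncidencePattern (G : SimpleGraph V) (D : V ⊕ G.edgeSet → Set α) : Prop where
  nonempty_vertex : ∀ v, (D (.inl v)).Nonempty
  disjoint_vertex : ∀ u v, u ≠ v → Disjoint (D (.inl u)) (D (.inl v))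
  disjoint_edge : ∀ e e', e ≠ e' → Disjoint (D (.inr e)) (D (.inr e'))
  disjoint_edge_vertex_iff : ∀ e v, Disjoint (D (.inr e)) (D (.inl v)) ↔ v ∉ (e : Sym2 V)

theorem IsIncidencePattern.of_disjoint_iff {K : V ⊕ G.edgeSet → Set α} {D : V ⊕ G.edgeSet → Set β}
    (hK : IsIncidencePattern G K) (h : ∀ i j, Disjoint (D i) (D j) ↔ Disjoint (K i) (K j)) :
    IsIncidencePattern G D where
  nonempty_vertex v := by
    rw [Set.nonempty_iff_ne_empty, Ne, ← Set.bot_eq_empty, ← disjoint_self, h, disjoint_self,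
      Set.bot_eq_empty, ← Ne, ← Set.nonempty_iff_ne_empty]
    exact hK.nonempty_vertex v
  disjoint_vertex u v huv := (h _ _).2 (hK.disjoint_vertex u v huv)
  disjoint_edge e e' hee' := (h _ _).2 (hK.disjoint_edge e e' hee')
  disjoint_edge_vertex_iff e v := (h _ _).trans (hK.disjoint_edge_vertex_iff e v)

theorem exists_connected_subset_diff {H : SimpleGraph α} {s t : Set α}
    (hs : (H.induce s).Preconnected) {p q : α} (hp : p ∈ s \ t) (hq : q ∈ s ∩ t) :
    ∃ P ⊆ s \ t, p ∈ P ∧ (H.induce P).Connected ∧ ∃ p' ∈ P, ∃ q' ∈ t, H.Adj p' q' := by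
  suffices hwalk : ∀ (a b : s), (H.induce s).Walk a b → a.1 ∉ t → b.1 ∈ t → ∃ P ⊆ s \ t,
      a.1 ∈ P ∧ (H.induce P).Connected ∧ ∃ p' ∈ P, ∃ q' ∈ t, H.Adj p' q' by
    obtain ⟨walk⟩ := hs ⟨p, hp.1⟩ ⟨q, hq.1⟩
    exact hwalk _ _ walk hp.2 hq.2
  intro a b walk
  induction walk with
  | nil => exact fun ha hb => (ha hb).elim
  | @cons a c b hac _ ih =>
    intro ha hb
    by_cases hc : c.1 ∈ t
    · refine ⟨{a.1}, Set.singleton_subset_iff.2 ⟨a.2, ha⟩, rfl, ?_, a, rfl, c, hc, hac⟩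
      have : Nonempty ({a.1} : Set α) := ⟨⟨a, rfl⟩⟩
      exact ⟨.of_subsingleton⟩
    · obtain ⟨P, hP, hcP, hconn, p', hp', hadj⟩ := ih hc hb
      refine ⟨{a.1, c.1} ∪ P, Set.union_subset (Set.pair_subset ⟨a.2, ha⟩ ⟨c.2, hc⟩) hP,
        Or.inl (Or.inl rfl), ?_, p', Or.inr hp', hadj⟩
      exact induce_union_connected (induce_pair_connected_of_adj (G := H) hac).preconnected
        hconn.preconnected ⟨c, Or.inr rfl, hcP⟩

theorem IsIncidencePattern.exists_half_edge {H : SimpleGraph α} {D : V ⊕ G.edgeSet → Set α}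
    (hD : IsIncidencePattern G D) (hconn : ∀ i, (H.induce (D i)).Preconnected) (e : G.edgeSet) :
    ∃ u v, (e : Sym2 V) = s(u, v) ∧ ∃ P ⊆ D (.inr e), (∀ w ≠ u, Disjoint P (D (.inl w))) ∧
      (D (.inl u) ∩ P).Nonempty ∧ (H.induce P).Connected ∧
      ∃ p ∈ P, ∃ q ∈ D (.inl v), H.Adj p q := by
  obtain ⟨⟨u, v⟩, he⟩ := e
  have hmeet (w : V) (hw : w ∈ s(u, v)) : (D (.inr ⟨s(u, v), he⟩) ∩ D (.inl w)).Nonempty := by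
    rw [← Set.not_disjoint_iff_nonempty_inter, hD.disjoint_edge_vertex_iff]
    exact not_not.2 hw
  obtain ⟨p, hpe, hpu⟩ := hmeet u (Sym2.mem_mk_left u v)
  obtain ⟨q, hq⟩ := hmeet v (Sym2.mem_mk_right u v)
  have hpv : p ∉ D (.inl v) := Set.disjoint_left.1 (hD.disjoint_vertex u v (G.ne_of_adj he)) hpu
  obtain ⟨P, hP, hpP, hPconn, hadj⟩ := exists_connected_subset_diff (hconn _) ⟨hpe, hpv⟩ hq
  refine ⟨u, v, rfl, P, hP.trans Set.sdiff_subset, fun w hwu => ?_, ⟨p, hpu, hpP⟩, hPconn, hadj⟩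
  rcases eq_or_ne w v with rfl | hwv
  · exact disjoint_sdiff_self_left.mono_left hP
  · refine ((hD.disjoint_edge_vertex_iff _ w).2 ?_).mono_left (hP.trans Set.sdiff_subset)
    exact fun hw => (Sym2.mem_iff.1 hw).elim hwu hwv

theorem IsIncidencePattern.isGridMinor [Finite V] {D : V ⊕ G.edgeSet → Set (ℤ × ℤ)}
    (hD : IsIncidencePattern G D) (hfin : ∀ i, (D i).Finite)
    (hconn : ∀ i, (gridGraph.induce (D i)).Preconnected) : IsGridMinor G := by
  choose src tgt hst P hP hPD hmeet hPconn hPadj using hD.exists_half_edge hconn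
  have hPP (e e' : G.edgeSet) (hee' : src e ≠ src e') : Disjoint (P e) (P e') :=
    (hD.disjoint_edge e e' fun h => hee' (congrArg src h)).mono (hP e) (hP e')
  let B (v : V) : Set (ℤ × ℤ) := D (.inl v) ∪ ⋃ e, ⋃ _ : src e = v, P e
  have hDB (v : V) : D (.inl v) ⊆ B v := Set.subset_union_left
  have hPB (e : G.edgeSet) : P e ⊆ B (src e) :=
    (Set.subset_iUnion₂ (s := fun e' (_ : src e' = src e) => P e') e rfl).trans
      Set.subset_union_right
  refine ⟨B, fun v => ?_, fun u v huv => ?_, fun v => ?_, fun u v huv => ?_⟩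
  · exact (hfin _).union (Set.finite_iUnion fun e => Set.finite_iUnion fun _ =>
      (hfin (.inr e)).subset (hP e))
  · simp only [Function.onFun, B, Set.disjoint_union_left, Set.disjoint_union_right,
      Set.disjoint_iUnion_left, Set.disjoint_iUnion_right]
    refine ⟨⟨hD.disjoint_vertex u v huv, ?_⟩, ?_⟩
    · rintro e rfl
      exact hPD e v huv.symm
    · rintro e rfl
      refine ⟨(hPD e u huv).symm, ?_⟩
      rintro e' rfl
      exact hPP e' e huv
  · obtain ⟨d, hd⟩ := hD.nonempty_vertex v
    refine induce_connected_of_patches d (hDB v hd) fun {p} hp => ?_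
    rcases hp with hp | hp
    · exact ⟨_, hDB v, hd, hp, hconn _ _ _⟩
    · obtain ⟨e, rfl, hpe⟩ := Set.mem_iUnion₂.1 hp
      exact ⟨_, Set.union_subset (hDB _) (hPB e), Or.inl hd, Or.inr hpe,
        (induce_union_connected (hconn _) (hPconn e).preconnected (hmeet e)).preconnected _ _⟩
  · obtain ⟨e, he⟩ : ∃ e : G.edgeSet, (e : Sym2 V) = s(u, v) := ⟨⟨_, huv⟩, rfl⟩
    obtain ⟨p, hp, q, hq, hpq⟩ := hPadj e
    rw [hst] at he
    rcases Sym2.eq_iff.1 he with ⟨rfl, rfl⟩ | ⟨rfl, rfl⟩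
    · exact ⟨p, hPB e hp, q, hDB _ hq, hpq⟩
    · exact ⟨q, hDB _ hq, p, hPB e hp, hpq.symm⟩

end IncidencePattern

section Drawing

variable {V : Type*} {G : SimpleGraph V}

/-- A drawing of `G` in the plane, as in `IsPlanar`, with a chosen orientation of every edge. -/
structure PlaneDrawing (G : SimpleGraph V) where
  point : V → ℝ × ℝ
  arc : G.edgeSet → unitInterval → ℝ × ℝ
  src : G.edgeSet → V
  tgt : G.edgeSet → V
  edge_eq : ∀ e : G.edgeSet, (e : Sym2 V) = s(src e, tgt e)
  point_injective : Function.Injective point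
  continuous_arc : ∀ e, Continuous (arc e)
  arc_zero : ∀ e, arc e 0 = point (src e)
  arc_one : ∀ e, arc e 1 = point (tgt e)
  eq_zero_or_eq_one : ∀ e t v, arc e t = point v → t = 0 ∨ t = 1
  eq_or_mem_range : ∀ e e' s t, arc e s = arc e' t → e = e' ∧ s = t ∨ ∃ v, arc e s = point v

theorem IsPlanar.nonempty_planeDrawing (h : IsPlanar G) : Nonempty (PlaneDrawing G) := by
  obtain ⟨f, γ, hf, hcont, hends, hinj, havoid, hcross⟩ := h
  choose src tgt hst hsrc htgt using hends
  refine ⟨f, γ, src, tgt, hst, hf, hcont, hsrc, htgt, fun e t v htv => ?_, fun e e' s t hst => ?_⟩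
  · by_contra! hne
    exact havoid e t (fun h => hne.1 (Subtype.ext h)) (fun h => hne.2 (Subtype.ext h)) v htv
  · obtain rfl | hee' := eq_or_ne e e'
    · exact Or.inl ⟨rfl, hinj e hst⟩
    · obtain ⟨v, hv⟩ := hcross e e' hee' s t hst
      exact Or.inr ⟨v, hv.symm⟩

namespace PlaneDrawing

variable (d : PlaneDrawing G) {e : G.edgeSet} {s t : unitInterval} {u v : V}

/-- The parameters in the third of the edge `e` next to its end `v`; empty if `v` is no end. -/
def nearEnd (e : G.edgeSet) (v : V) : Set unitInterval :=
  {t | (t : ℝ) ≤ 1 / 3 ∧ d.src e = v ∨ 2 / 3 ≤ (t : ℝ) ∧ d.tgt e = v}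

/-- The vertex `v` together with the adjacent thirds of its edges. -/
def star (v : V) : Set (ℝ × ℝ) := {d.point v} ∪ ⋃ e, d.arc e '' d.nearEnd e v

/-- The middle third of the edge `e`. -/
def core (e : G.edgeSet) : Set (ℝ × ℝ) := d.arc e '' {t | 1 / 3 ≤ (t : ℝ) ∧ (t : ℝ) ≤ 2 / 3}

variable {d}

theorem eq_of_mem_nearEnd (hu : t ∈ d.nearEnd e u) (hv : t ∈ d.nearEnd e v) : u = v := by
  rcases hu with ⟨htu, rfl⟩ | ⟨htu, rfl⟩ <;> rcases hv with ⟨htv, hv⟩ | ⟨htv, hv⟩ <;>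
    first | exact hv | linarith

theorem mem_nearEnd_of_arc_eq_point (h : d.arc e t = d.point v) : t ∈ d.nearEnd e v := by
  rcases d.eq_zero_or_eq_one e t v h with rfl | rfl
  · rw [d.arc_zero] at h
    exact Or.inl ⟨by norm_num, d.point_injective h⟩
  · rw [d.arc_one] at h
    exact Or.inr ⟨by norm_num, d.point_injective h⟩

theorem point_mem_star_iff : d.point u ∈ d.star v ↔ u = v := by
  refine ⟨?_, fun h => Or.inl (congrArg _ h)⟩
  rintro (h | h)
  · exact d.point_injective h
  · obtain ⟨e, t, ht, h⟩ := Set.mem_iUnion.1 h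
    exact eq_of_mem_nearEnd (mem_nearEnd_of_arc_eq_point h) ht

theorem arc_mem_star_iff : d.arc e t ∈ d.star v ↔ t ∈ d.nearEnd e v := by
  refine ⟨?_, fun h => Or.inr (Set.mem_iUnion.2 ⟨e, t, h, rfl⟩)⟩
  rintro (h | h)
  · exact mem_nearEnd_of_arc_eq_point h
  · obtain ⟨e', t', ht', harc⟩ := Set.mem_iUnion.1 h
    obtain ⟨rfl, rfl⟩ | ⟨w, hw⟩ := d.eq_or_mem_range _ _ _ _ harc
    · exact ht'
    · obtain rfl := eq_of_mem_nearEnd (mem_nearEnd_of_arc_eq_point hw) ht'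
      exact mem_nearEnd_of_arc_eq_point (harc.symm.trans hw)

variable (d)

theorem isIncidencePattern : IsIncidencePattern G (Sum.elim d.star d.core) where
  nonempty_vertex v := ⟨d.point v, Or.inl rfl⟩
  disjoint_vertex u v huv := by
    refine Set.disjoint_left.2 fun x hu hv => huv ?_
    rcases hu with rfl | hu
    · exact point_mem_star_iff.1 hv
    · obtain ⟨e, t, ht, rfl⟩ := Set.mem_iUnion.1 hu
      exact eq_of_mem_nearEnd ht (arc_mem_star_iff.1 hv)
  disjoint_edge e e' hee' := by
    refine Set.disjoint_left.2 ?_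
    rintro _ ⟨s, hs, rfl⟩ ⟨t, -, hts⟩
    obtain ⟨rfl, -⟩ | ⟨w, hw⟩ := d.eq_or_mem_range _ _ _ _ hts.symm
    · exact hee' rfl
    · rcases d.eq_zero_or_eq_one _ _ _ hw with rfl | rfl <;> norm_num at hs
  disjoint_edge_vertex_iff e v := by
    rw [← not_iff_not, not_not, Set.not_disjoint_iff, d.edge_eq, Sym2.mem_iff]
    constructor
    · rintro ⟨_, ⟨t, -, rfl⟩, htv⟩
      exact (arc_mem_star_iff.1 htv).imp (·.2.symm) (·.2.symm)
    · rintro (rfl | rfl)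
      · exact ⟨_, ⟨⟨1 / 3, by norm_num⟩, by norm_num, rfl⟩,
          arc_mem_star_iff.2 (Or.inl ⟨le_rfl, rfl⟩)⟩
      · exact ⟨_, ⟨⟨2 / 3, by norm_num⟩, by norm_num, rfl⟩,
          arc_mem_star_iff.2 (Or.inr ⟨le_rfl, rfl⟩)⟩

theorem isCompact_star [Finite V] (v : V) : IsCompact (d.star v) := by
  refine isCompact_singleton.union (isCompact_iUnion fun e => ?_)
  refine IsCompact.image (IsClosed.isCompact ?_) (d.continuous_arc e)
  exact ((isClosed_le continuous_subtype_val continuous_const).and isClosed_const).union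
    ((isClosed_le continuous_const continuous_subtype_val).and isClosed_const)

theorem isCompact_core (e : G.edgeSet) : IsCompact (d.core e) :=
  IsCompact.image (IsClosed.isCompact ((isClosed_le continuous_const continuous_subtype_val).and
    (isClosed_le continuous_subtype_val continuous_const))) (d.continuous_arc e)

theorem isPreconnected_arc_image (e : G.edgeSet) {T : Set unitInterval} (hT : T.OrdConnected) :
    IsPreconnected (d.arc e '' T) :=
  hT.isPreconnected.image _ (d.continuous_arc e).continuousOn

theorem isPreconnected_star (v : V) : IsPreconnected (d.star v) := by
  refine isPreconnected_of_forall (d.point v) fun x hx => ?_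
  rcases hx with rfl | hx
  · exact ⟨{d.point v}, Set.subset_union_left, rfl, rfl, isPreconnected_singleton⟩
  obtain ⟨e, hx⟩ := Set.mem_iUnion.1 hx
  have hpatch {T : Set unitInterval} (hT : T.OrdConnected) (hTv : T ⊆ d.nearEnd e v)
      (hvT : d.point v ∈ d.arc e '' T) (hxT : x ∈ d.arc e '' T) :
      ∃ K ⊆ d.star v, d.point v ∈ K ∧ x ∈ K ∧ IsPreconnected K :=
    ⟨_, Set.image_subset_iff.2 fun t ht => arc_mem_star_iff.2 (hTv ht), hvT, hxT,
      d.isPreconnected_arc_image e hT⟩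
  obtain ⟨t, ⟨ht, rfl⟩ | ⟨ht, rfl⟩, rfl⟩ := hx
  · exact hpatch (T := {t | (t : ℝ) ≤ 1 / 3})
      (Set.ordConnected_Iic.preimage_mono (Subtype.mono_coe _))
      (fun _ hs => Or.inl ⟨hs, rfl⟩) ⟨0, by norm_num, d.arc_zero e⟩ ⟨t, ht, rfl⟩
  · exact hpatch (T := {t | 2 / 3 ≤ (t : ℝ)})
      (Set.ordConnected_Ici.preimage_mono (Subtype.mono_coe _))
      (fun _ hs => Or.inr ⟨hs, rfl⟩) ⟨1, by norm_num, d.arc_one e⟩ ⟨t, ht, rfl⟩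

theorem isPreconnected_core (e : G.edgeSet) : IsPreconnected (d.core e) :=
  d.isPreconnected_arc_image e (Set.ordConnected_Icc.preimage_mono (Subtype.mono_coe _))

end PlaneDrawing

theorem IsPlanar.isGridMinor [Finite V] (h : IsPlanar G) : IsGridMinor G := by
  obtain ⟨d⟩ := h.nonempty_planeDrawing
  obtain ⟨D, hfin, hconn, hdisj⟩ := exists_grid_model
    (K := Sum.elim d.star d.core) (Sum.forall.2 ⟨d.isCompact_star, d.isCompact_core⟩)
    (Sum.forall.2 ⟨d.isPreconnected_star, d.isPreconnected_core⟩)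
  exact (d.isIncidencePattern.of_disjoint_iff hdisj).isGridMinor hfin hconn

end Drawing

/-! ### The edge bound -/

section EdgeBound

variable {V : Type*} {G : SimpleGraph V}

theorem IsPlanar.mono {H : SimpleGraph V} (hle : G ≤ H) (hH : IsPlanar H) :
    IsPlanar G := by
  obtain ⟨f, γ, hf, hcont, hends, hinj, havoid, hcross⟩ := hH
  let ι : G.edgeSet → H.edgeSet := Set.inclusion (edgeSet_mono hle)
  refine ⟨f, fun e => γ (ι e), hf, fun e => hcont (ι e), fun e => hends (ι e),
    fun e => hinj (ι e), fun e => havoid (ι e), fun e e' hne => hcross (ι e) (ι e') ?_⟩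
  exact (Set.inclusion_injective (edgeSet_mono hle)).ne hne

theorem IsPlanar.card_edgeSet_le_two_mul [Finite V] (h : IsPlanar G) (hG : G.CliqueFree 3) :
    Nat.card G.edgeSet ≤ 2 * Nat.card V := by
  have := Fintype.ofFinite V
  have := Fintype.ofFinite G.edgeSet
  obtain ⟨ends, F, sides, hends, hdual⟩ := h.isGridMinor.exists_isAbstractDual
  have := hdual.mul_card_le fun C => four_le_card_support_of_boundary_eq_zero hG hends
  simp only [Nat.card_eq_fintype_card]
  omega

theorem card_edgeSet_le_of_le_iSup_isPlanar [Finite V] {n : ℕ} {H : Fin n → SimpleGraph V}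
    (hH : ∀ i, IsPlanar (H i)) (hG : G.CliqueFree 3) (hle : G ≤ ⨆ i, H i) :
    Nat.card G.edgeSet ≤ n * (2 * Nat.card V) := by
  have hcover : G.edgeSet ⊆ ⋃ i, (G ⊓ H i).edgeSet := by
    intro e he
    induction e with | _ u v
    obtain ⟨i, hi⟩ := iSup_adj.1 (hle he)
    exact Set.mem_iUnion.2 ⟨i, he, hi⟩
  calc Nat.card G.edgeSet ≤ (⋃ i, (G ⊓ H i).edgeSet).ncard :=
        Set.ncard_le_ncard hcover (Set.toFinite _)
    _ ≤ ∑ i, (G ⊓ H i).edgeSet.ncard := Set.ncard_iUnion_le_of_fintype _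
    _ ≤ ∑ _ : Fin n, 2 * Nat.card V := Finset.sum_le_sum fun i _ =>
        ((hH i).mono inf_le_right).card_edgeSet_le_two_mul (hG.anti inf_le_left)
    _ = n * (2 * Nat.card V) := by simp

theorem card_mul_card_le_of_le_iSup_isPlanar {ι : Type*} {W : ι → Type*} [Finite (Σ i, W i)]
    {n : ℕ} {H : Fin n → SimpleGraph (Σ i, W i)} (hH : ∀ i, IsPlanar (H i))
    (hle : completeMultipartiteGraph W ≤ ⨆ i, H i) {i j : ι} (hij : i ≠ j) :
    Nat.card (W i) * Nat.card (W j) ≤ n * (2 * Nat.card (Σ i, W i)) := by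
  let B := (completeMultipartiteGraph W).between (Set.range (Sigma.mk i)) (Set.range (Sigma.mk j))
  have hB : B.CliqueFree 3 := by
    refine (between_isBipartite (Set.disjoint_left.2 ?_)).cliqueFree (by norm_num)
    rintro _ ⟨a, rfl⟩ ⟨b, hab⟩
    exact hij (congrArg Sigma.fst hab).symm
  let edge (p : W i × W j) : B.edgeSet :=
    ⟨s(⟨i, p.1⟩, ⟨j, p.2⟩), hij, Or.inl ⟨⟨_, rfl⟩, ⟨_, rfl⟩⟩⟩
  have hedge : Function.Injective edge := by
    rintro ⟨a, b⟩ ⟨a', b'⟩ h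
    rcases Sym2.eq_iff.1 (congrArg Subtype.val h) with ⟨ha, hb⟩ | ⟨ha, -⟩
    · exact Prod.ext (sigma_mk_injective ha) (sigma_mk_injective hb)
    · exact (hij (congrArg Sigma.fst ha)).elim
  rw [← Nat.card_prod]
  exact (Nat.card_le_card_of_injective edge hedge).trans
    (card_edgeSet_le_of_le_iSup_isPlanar hH hB (between_le.trans hle))

end EdgeBound

section Thickness

variable {V : Type*} {G : SimpleGraph V} {n : ℕ} {H : Fin n → SimpleGraph V}

theorem thickness_le (hH : ∀ i, IsPlanar (H i)) (hsup : ⨆ i, H i = G) : thickness G ≤ n :=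
  Nat.sInf_le ⟨H, fun i => hsup ▸ le_iSup H i, hH, hsup⟩

theorem exists_isPlanar_iSup_eq_of_thickness (hH : ∀ i, IsPlanar (H i)) (hsup : ⨆ i, H i = G) :
    ∃ L : Fin (thickness G) → SimpleGraph V, (∀ i, IsPlanar (L i)) ∧ ⨆ i, L i = G := by
  have hne : {m | ∃ L : Fin m → SimpleGraph V,
      (∀ i, L i ≤ G) ∧ (∀ i, IsPlanar (L i)) ∧ ⨆ i, L i = G}.Nonempty :=
    ⟨n, H, fun i => hsup ▸ le_iSup H i, hH, hsup⟩
  obtain ⟨L, -, hL⟩ := Nat.sInf_mem hne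
  exact ⟨L, hL⟩

end Thickness

/-! ### Straight-line drawings -/

section StraightLine

variable {R : Type*}

/-- Twice the signed area of the triangle `abc`. -/
def orient [CommRing R] (a b c : R × R) : R :=
  (b.1 - a.1) * (c.2 - a.2) - (b.2 - a.2) * (c.1 - a.1)

theorem orient_swap [CommRing R] (a b c : R × R) : orient b a c = -orient a b c := by
  simp only [orient]
  ring

theorem orient_lineMap [CommRing R] (a b c d : R × R) (t : R) :
    orient a b (AffineMap.lineMap c d t) = (1 - t) * orient a b c + t * orient a b d := by
  simp only [orient, AffineMap.lineMap_apply_ring', AffineMap.fst_lineMap, AffineMap.snd_lineMap]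
  ring

theorem orient_lineMap_self [CommRing R] (a b : R × R) (t : R) :
    orient a b (AffineMap.lineMap a b t) = 0 := by
  simp only [orient, AffineMap.lineMap_apply_ring', AffineMap.fst_lineMap, AffineMap.snd_lineMap]
  ring

theorem orient_eq_zero_of_mem_segment {a b z : ℝ × ℝ} (h : z ∈ segment ℝ a b) :
    orient a b z = 0 := by
  rw [segment_eq_image_lineMap] at h
  obtain ⟨t, -, rfl⟩ := h
  exact orient_lineMap_self a b t

theorem eq_left_of_mem_segment_of_mem_segment {a b c z : ℝ × ℝ} (h : orient a b c ≠ 0)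
    (hb : z ∈ segment ℝ a b) (hc : z ∈ segment ℝ a c) : z = a := by
  have hz := orient_eq_zero_of_mem_segment hb
  rw [segment_eq_image_lineMap] at hc
  obtain ⟨t, -, rfl⟩ := hc
  have ha : orient a b a = 0 := by simp [orient]
  obtain rfl : t = 0 := by simpa [orient_lineMap, ha, h] using hz
  simp

theorem disjoint_segment_of_orient_mul_pos {a b c d : ℝ × ℝ}
    (h : 0 < orient a b c * orient a b d) : Disjoint (segment ℝ a b) (segment ℝ c d) := by
  refine Set.disjoint_left.2 fun z hab hcd => ?_
  have hz := orient_eq_zero_of_mem_segment hab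
  rw [segment_eq_image_lineMap] at hcd
  obtain ⟨t, ⟨ht₀, ht₁⟩, rfl⟩ := hcd
  rw [orient_lineMap] at hz
  rcases pos_and_pos_or_neg_and_neg_of_mul_pos h with ⟨hc, hd⟩ | ⟨hc, hd⟩
  · exact (convex_Ioi (0 : ℝ) hc hd (sub_nonneg.2 ht₁) ht₀ (by ring)).ne' hz
  · exact (convex_Iio (0 : ℝ) hc hd (sub_nonneg.2 ht₁) ht₀ (by ring)).ne hz

variable {V W : Type*}

/-- The points `f v`, joined by straight segments along the pairs related by `r`, are in general
enough position to draw the graph of `r` in the plane: no vertex lies on the line through an edge it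
does not belong to, and of any two edges without a common end one lies strictly on one side of the
line through the other. -/
def IsStraightLineDrawing_s15 [CommRing R] [LinearOrder R] (r : V → V → Prop) (f : V → R × R) : Prop :=
  Function.Injective f ∧
    (∀ u v, r u v → ∀ w, w = u ∨ w = v ∨ orient (f u) (f v) (f w) ≠ 0) ∧
    ∀ u v, r u v → ∀ x y, r x y → (u = x ∨ u = y ∨ v = x ∨ v = y) ∨
      0 < orient (f u) (f v) (f x) * orient (f u) (f v) (f y) ∨
      0 < orient (f x) (f y) (f u) * orient (f x) (f y) (f v)

namespace IsStraightLineDrawing_s15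

theorem comp [CommRing R] [LinearOrder R] {r : V → V → Prop} {f : V → R × R}
    (h : IsStraightLineDrawing_s15 r f) {g : W → V} (hg : Function.Injective g) :
    IsStraightLineDrawing_s15 (fun u v => r (g u) (g v)) (f ∘ g) := by
  obtain ⟨hf, hline, hside⟩ := h
  refine ⟨hf.comp hg, fun u v huv w => ?_, fun u v huv x y hxy => ?_⟩
  · simpa only [Function.comp_apply, hg.eq_iff] using hline _ _ huv (g w)
  · simpa only [Function.comp_apply, hg.eq_iff] using hside _ _ huv _ _ hxy

theorem intCast_s15 {r : V → V → Prop} {f : V → ℤ × ℤ} (h : IsStraightLineDrawing_s15 r f) :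
    IsStraightLineDrawing_s15 r fun v => (((f v).1 : ℝ), ((f v).2 : ℝ)) := by
  obtain ⟨hf, hline, hside⟩ := h
  have horient (u v w : V) : orient (((f u).1 : ℝ), ((f u).2 : ℝ)) ((f v).1, (f v).2)
      ((f w).1, (f w).2) = (orient (f u) (f v) (f w) : ℤ) := by
    simp [orient]
  refine ⟨fun u v huv => hf ?_, fun u v huv w => ?_, fun u v huv x y hxy => ?_⟩
  · simpa [Prod.ext_iff] using huv
  · simpa only [horient, Int.cast_ne_zero, ne_eq, Int.cast_eq_zero] using hline u v huv w
  · simpa only [horient, ← Int.cast_mul, Int.cast_pos] using hside u v huv x y hxy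

variable {r : V → V → Prop} {f : V → ℝ × ℝ}

theorem eq_of_mem_segment_of_mem_segment (h : IsStraightLineDrawing_s15 r f) {u v w : V}
    (huv : r u v ∨ r v u) (hwu : w ≠ u) (hwv : w ≠ v) {z : ℝ × ℝ}
    (hz : z ∈ segment ℝ (f u) (f v)) (hz' : z ∈ segment ℝ (f u) (f w)) : f u = z := by
  refine (eq_left_of_mem_segment_of_mem_segment ?_ hz hz').symm
  rcases huv with huv | hvu
  · exact ((h.2.1 u v huv w).resolve_left hwu).resolve_left hwv
  · rw [orient_swap, neg_ne_zero]
    exact ((h.2.1 v u hvu w).resolve_left hwv).resolve_left hwu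

theorem mem_range_of_mem_segment (h : IsStraightLineDrawing_s15 r f) {u v x y : V} (huv : r u v)
    (hxy : r x y) (hxy' : x ≠ y) (hne : s(u, v) ≠ s(x, y)) {z : ℝ × ℝ}
    (hz : z ∈ segment ℝ (f u) (f v)) (hz' : z ∈ segment ℝ (f x) (f y)) : z ∈ Set.range f := by
  rw [Ne, Sym2.eq_iff] at hne
  push Not at hne
  rcases h.2.2 u v huv x y hxy with (rfl | rfl | rfl | rfl) | hsep | hsep
  · exact ⟨u, h.eq_of_mem_segment_of_mem_segment (.inl huv) hxy'.symm (hne.1 rfl).symm hz hz'⟩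
  · exact ⟨u, h.eq_of_mem_segment_of_mem_segment (.inl huv) hxy' (hne.2 rfl).symm hz
      (segment_symm ℝ (f x) _ ▸ hz')⟩
  · exact ⟨v, h.eq_of_mem_segment_of_mem_segment (.inr huv) hxy'.symm (fun hy => hne.2 hy.symm rfl)
      (segment_symm ℝ (f u) _ ▸ hz) hz'⟩
  · exact ⟨v, h.eq_of_mem_segment_of_mem_segment (.inr huv) hxy' (fun hx => hne.1 hx.symm rfl)
      (segment_symm ℝ (f u) _ ▸ hz) (segment_symm ℝ (f x) _ ▸ hz')⟩
  · exact (Set.disjoint_left.1 (disjoint_segment_of_orient_mul_pos hsep) hz hz').elim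
  · exact (Set.disjoint_left.1 (disjoint_segment_of_orient_mul_pos hsep) hz' hz).elim

theorem isPlanar_s15 (h : IsStraightLineDrawing_s15 r f) : IsPlanar (fromRel r) := by
  have hr (e : (fromRel r).edgeSet) : ∃ u v, (e : Sym2 V) = s(u, v) ∧ u ≠ v ∧ r u v := by
    obtain ⟨e, he⟩ := e
    induction e with | _ u v
    obtain ⟨hne, huv | hvu⟩ := he
    · exact ⟨u, v, rfl, hne, huv⟩
    · exact ⟨v, u, Sym2.eq_swap, hne.symm, hvu⟩
  choose src tgt hst hne hr using hr
  let arc (e : (fromRel r).edgeSet) (t : unitInterval) : ℝ × ℝ :=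
    AffineMap.lineMap (f (src e)) (f (tgt e)) (t : ℝ)
  have harc (e) (t) : arc e t ∈ segment ℝ (f (src e)) (f (tgt e)) := by
    rw [segment_eq_image_lineMap]
    exact ⟨t, t.2, rfl⟩
  have hinj (e) : Function.Injective (arc e) := fun s t hst => Subtype.ext <|
    AffineMap.lineMap_injective ℝ (h.1.ne (hne e)) hst
  have hzero (e) : arc e 0 = f (src e) := by simp [arc]
  have hone (e) : arc e 1 = f (tgt e) := by simp [arc]
  refine ⟨f, arc, h.1, fun e => ?_, fun e => ⟨src e, tgt e, hst e, hzero e, hone e⟩, hinj,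
    fun e t ht₀ ht₁ v hv => ?_, fun e e' hee' s t harcs => ?_⟩
  · fun_prop
  · rcases h.2.1 _ _ (hr e) v with rfl | rfl | hv'
    · exact ht₀ (congrArg Subtype.val (hinj e (hv.trans (hzero e).symm)))
    · exact ht₁ (congrArg Subtype.val (hinj e (hv.trans (hone e).symm)))
    · exact hv' (hv ▸ orient_eq_zero_of_mem_segment (harc e t))
  · refine h.mem_range_of_mem_segment (hr e) (hr e') (hne e') (fun heq => hee' (Subtype.ext ?_))
      (harc e s) (harcs ▸ harc e' t)
    rw [hst, hst, heq]

end IsStraightLineDrawing_s15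

end StraightLine

section Layers

-- Quantifying over the lists `N u`, not over all pairs, makes evaluation in the kernel feasible.
instance {n : ℕ} (N : Fin n → List (Fin n)) (f : Fin n → ℤ × ℤ) :
    Decidable (IsStraightLineDrawing_s15 (fun u v => v ∈ N u) f) :=
  have (u : Fin n) (p : Fin n → Prop) [DecidablePred p] : Decidable (∀ v, v ∈ N u → p v) :=
    List.decidableBAll p (N u)
  inferInstanceAs (Decidable (_ ∧ (∀ _ _, _ → _) ∧ ∀ _ _, _ → _))

/-- Positions of the vertices of `K_{2,13,13}` in four drawings. The parts are numbered `0, 1`, then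
`2, …, 14`, then `15, …, 27`. -/
def layerPosition : Fin 4 → Fin 28 → ℤ × ℤ :=
  ![![(0, 0), (25, 37), (10, 13), (21, 28), (45, 23), (33, 30), (34, 39), (17, 14), (31, 49),
      (31, 10), (29, 37), (60, 0), (23, 42), (36, 8), (33, 20), (27, 47), (19, 29), (23, 11),
      (38, 16), (30, 60), (39, 33), (26, 25), (13, 22), (25, 19), (19, 5), (38, 3), (48, 9),
      (15, 17)],
    ![(71, 29), (0, 0), (37, 32), (30, 25), (65, 62), (59, 42), (34, 16), (34, 37), (70, 15),
      (100, 0), (86, 21), (22, 4), (65, 10), (49, 56), (40, 72), (31, 46), (41, 48), (80, 3),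
      (51, 17), (15, 16), (28, 28), (48, 11), (58, 66), (63, 4), (79, 13), (50, 6), (48, 31),
      (50, 100)],
    ![(0, 0), (28, 6), (29, 10), (60, 0), (35, 4), (29, 26), (33, 32), (51, 11), (30, 60), (8, 8),
      (22, 35), (42, 21), (39, 29), (49, 4), (24, 29), (18, 2), (32, 14), (42, 15), (39, 36),
      (27, 13), (22, 40), (18, 12), (44, 15), (36, 6), (47, 20), (34, 48), (21, 30), (36, 14)],
    ![(0, 0), (75, 29), (42, 9), (54, 69), (100, 0), (76, 16), (45, 71), (63, 18), (55, 56),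
      (62, 58), (56, 72), (31, 39), (49, 40), (20, 22), (66, 10), (39, 57), (50, 100), (57, 17),
      (64, 15), (56, 77), (39, 29), (28, 7), (68, 45), (60, 54), (84, 5), (65, 22), (61, 36),
      (47, 57)]]

/-- The adjacency lists of four graphs covering `K_{2,13,13}`. Every edge is listed at its smaller
end, so only the vertices of the first two parts have a list. -/
def layerTable : Fin 4 → List (List (Fin 28)) :=
  ![[[2, 7, 11, 12, 14, 17, 19, 22, 23, 24, 25, 27], [3, 10, 12, 15, 21], [16, 22, 27],
      [16, 21, 27], [17, 18, 19, 20, 25, 26], [20, 23], [15, 20, 21, 23], [21, 23, 27], [15, 19],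
      [18, 24], [15, 21], [19, 26], [15, 16, 19, 22], [18, 24, 25], [17, 20, 23]],
    [[5, 6, 10, 18, 26], [6, 9, 11, 14, 17, 19, 27], [20, 26], [19, 20, 26], [22, 27], [22, 26],
      [19, 26], [15, 16, 19, 20, 26], [17, 18, 21, 24], [17, 27], [17, 18, 22, 24, 27],
      [17, 18, 21, 23, 25], [17, 21, 23, 25], [22, 26], [15, 16, 19, 22, 26, 27]],
    [[3, 8, 9, 15, 20], [2, 23], [15, 19, 23], [15, 17, 18, 22, 24, 25], [15, 23],
      [15, 16, 17, 19, 21, 25, 27], [17, 18, 22, 24, 25], [22, 24], [20, 25],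
      [15, 20, 21, 25, 26], [20, 25, 26], [22, 24], [18, 24], [15, 16, 17, 19, 23, 27], [21, 25]],
    [[4, 13, 16, 21], [4, 5, 7, 8, 13, 16, 18, 20, 22, 24, 25, 26], [17, 18, 21, 24, 25], [23],
      [16, 21, 24], [18, 24], [16, 27], [17, 18, 25], [16, 22, 23, 26, 27], [16, 19, 22, 23],
      [16, 19, 23], [15, 16, 20, 27], [20, 26, 27], [20, 21], [18, 24]]]

/-- The neighbors larger than `u` of the vertex `u` in the `k`-th layer. -/
def layerNeighbors (k : Fin 4) (u : Fin 28) : List (Fin 28) := (layerTable k).getD u []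

theorem isStraightLineDrawing_layer (k : Fin 4) :
    IsStraightLineDrawing_s15 (fun u v => v ∈ layerNeighbors k u) (layerPosition k) := by
  revert k
  decide +kernel

/-- The sizes of the parts of `K_{2,13,13}`. -/
def partSize : Fin 3 → ℕ := ![2, 13, 13]

/-- The numbering of the vertices of `K_{2,13,13}` in the lexicographic order. -/
def vertexNumber : (Σ i, Fin (partSize i)) ≃ Fin 28 :=
  finSigmaFinEquiv.trans (finCongr (by decide))

theorem exists_mem_layerNeighbors_iff (u v : Σ i, Fin (partSize i)) :
    (∃ k, vertexNumber v ∈ layerNeighbors k (vertexNumber u) ∨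
      vertexNumber u ∈ layerNeighbors k (vertexNumber v)) ↔ u.1 ≠ v.1 := by
  revert u v
  decide +kernel

/-- The `k`-th of four planar graphs whose union is `K_{2,13,13}`. -/
def layer (k : Fin 4) : SimpleGraph (Σ i, Fin (partSize i)) :=
  fromRel fun u v => vertexNumber v ∈ layerNeighbors k (vertexNumber u)

theorem isPlanar_layer (k : Fin 4) : IsPlanar (layer k) :=
  ((isStraightLineDrawing_layer k).comp vertexNumber.injective).intCast_s15.isPlanar_s15

theorem iSup_layer : ⨆ k, layer k = completeMultipartiteGraph fun i => Fin (partSize i) := by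
  ext u v
  simp only [layer, iSup_adj, fromRel_adj, exists_and_left, exists_mem_layerNeighbors_iff]
  exact and_iff_right_of_imp (ne_of_apply_ne Sigma.fst)

end Layers

theorem thickness_K2_13_13 :
    thickness (completeMultipartiteGraph ![Fin 2, Fin 13, Fin 13]) = 4 := by
  have hparts : ![Fin 2, Fin 13, Fin 13] = fun i => Fin (partSize i) := by
    funext i
    fin_cases i <;> rfl
  rw [hparts]
  have hle := thickness_le isPlanar_layer iSup_layer
  obtain ⟨H, hH, hsup⟩ := exists_isPlanar_iSup_eq_of_thickness isPlanar_layer iSup_layer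
  have hcard : Nat.card (Σ i, Fin (partSize i)) = 28 := by
    rw [Nat.card_congr vertexNumber, Nat.card_fin]
  have hcount := card_mul_card_le_of_le_iSup_isPlanar hH hsup.ge (show (1 : Fin 3) ≠ 2 by decide)
  rw [hcard, Nat.card_fin, Nat.card_fin] at hcount
  change 13 * 13 ≤ _ * (2 * 28) at hcount
  omega
end
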